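/- arXiv:2501.08684 — 2 statements merged into one kernel-verified Lean document; each statement's English description precedes it below -/
import Mathlib

section
/- For the corrected BFO rule, the switch count is non-increasing: for every odd cyclic configuration x, s(F(x)) ≤ s(x). -/
/-- The parity (XOR of all cells) of a cyclic binary configuration. -/
def Par {n : ℕ} [NeZero n] (x : ZMod n → Bool) : ZMod 2 :=
  ∑ i : ZMod n, if x i then 1 else 0

/-- The global CA rule induced by a local rule of radius `r`
on cyclic configurations of length `n`. -/
def globalRule (r : ℕ) (f : (Fin (2*r+1) → Bool) → Bool) {n : ℕ}
    (x : ZMod n → Bool) : ZMod n → Bool :=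
  fun i => f (fun j => x (i + ((j : ℕ) : ZMod n) - (r : ZMod n)))

/-- The active (center-flipping) neighbourhoods of the corrected BFO rule
(transitions T1–T12; the center is cell 4 of 9). -/
def bfoActive (w : Fin 9 → Bool) : Bool :=
  (w 1 && w 2 && w 3 && !w 4 && !w 5) ||               -- T1
  (w 0 && w 1 && w 2 && !w 3 && !w 4) ||               -- T2
  (!w 1 && !w 2 && w 3 && !w 4 && !w 5) ||             -- T3
  (!w 0 && !w 1 && w 2 && !w 3 && !w 4) ||             -- T4
  (!w 3 && w 4 && w 5 && !w 6) ||                      -- T5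
  (!w 2 && w 3 && w 4 && !w 5) ||                      -- T6
  (!w 1 && !w 2 && w 3 && !w 4 && w 5 && !w 6) ||      -- T7
  (!w 2 && !w 3 && w 4 && !w 5 && w 6 && !w 7) ||      -- T8
  (w 3 && w 4 && w 5 && !w 6 && w 7) ||                -- T9
  (w 0 && w 1 && w 2 && !w 3 && w 4 && !w 5) ||        -- T10
  (w 0 && w 1 && w 2 && !w 3 && w 4 && w 5 && w 6) ||  -- T11
  (w 2 && w 3 && w 4 && !w 5 && w 6 && w 7 && !w 8)    -- T12

/-- The corrected BFO local rule (radius 4). -/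
def bfoLocal (w : Fin 9 → Bool) : Bool := xor (bfoActive w) (w 4)

/-- The global rule induced by the corrected BFO rule. -/
def bfoGlobal {n : ℕ} (x : ZMod n → Bool) : ZMod n → Bool :=
  globalRule 4 bfoLocal x

/-- `x i x (i+1)` is a box: the pattern 01 preceded by 1 and followed by 00. -/
def IsBox {n : ℕ} (x : ZMod n → Bool) (i : ZMod n) : Prop :=
  x (i-1) = true ∧ x i = false ∧ x (i+1) = true ∧ x (i+2) = false ∧ x (i+3) = false

/-- Cell `j` belongs to some box of `x`. -/
def InBox {n : ℕ} (x : ZMod n → Bool) (j : ZMod n) : Prop :=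
  ∃ i, IsBox x i ∧ (j = i ∨ j = i + 1)

/-- `x` has a switch at position `i`: either a b-switch (a box at `i+1`)
or an r-switch (`x i ≠ x (i+1)` with neither cell in a box). -/
def IsSwitch {n : ℕ} (x : ZMod n → Bool) (i : ZMod n) : Prop :=
  IsBox x (i+1) ∨ (x i ≠ x (i+1) ∧ ¬ InBox x i ∧ ¬ InBox x (i+1))

/-- The number of switches of the configuration `x`. -/
noncomputable def switchCount {n : ℕ} (x : ZMod n → Bool) : ℕ :=
  Nat.card {i : ZMod n // IsSwitch x i}

/-- The block of length `2k+2` starting at position `i` is an ordered block. -/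
def IsOrderedBlock {n : ℕ} (x : ZMod n → Bool) (i : ZMod n) (k : ℕ) : Prop :=
  (∀ j ≤ k, ¬ (x (i + 2*j) = true ∧ x (i + 2*j + 1) = false)) ∧
  (x i = false ∧ x (i+1) = true) ∧
  ¬ (x (i + 2*k) = false ∧ x (i + 2*k + 1) = true) ∧
  (x (i + 2*k) = true ∧ x (i + 2*k + 1) = true → x (i + 2*k + 2) = false)

/-- An ordered block which is not a proper sub-block of another ordered block. -/
def IsMaximalOrderedBlock {n : ℕ} (x : ZMod n → Bool) (i : ZMod n) (k : ℕ) : Prop :=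
  IsOrderedBlock x i k ∧
  ∀ (i' : ZMod n) (k' d : ℕ), IsOrderedBlock x i' k' →
    i = i' + 2*d → 2*d + 2*k + 2 ≤ 2*k' + 2 → d = 0 ∧ k = k'

/-- `x` contains the word `w` starting at position `i`. -/
def ContainsAt {n : ℕ} (x : ZMod n → Bool) (i : ZMod n) (w : List Bool) : Prop :=
  ∀ j : Fin w.length, x (i + ((j : ℕ) : ZMod n)) = w.get j

/-- `x` belongs to `X_s`: the switch count is constant during the whole evolution
under the corrected BFO rule. -/
def InXs {n : ℕ} (x : ZMod n → Bool) : Prop :=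
  ∀ t : ℕ, switchCount (bfoGlobal^[t] x) = switchCount x

/-- Membership of the neighbourhood of cell `i` in one of the AT pairs
`T_{1,2}`, `T_{3,4}` (center at `i`). -/
def MatchT1234 {n : ℕ} (y : ZMod n → Bool) (i : ZMod n) : Prop :=
  (y (i-3) = true ∧ y (i-2) = true ∧ y (i-1) = true ∧ y i = false ∧ y (i+1) = false) ∨
  (y (i-4) = true ∧ y (i-3) = true ∧ y (i-2) = true ∧ y (i-1) = false ∧ y i = false) ∨
  (y (i-3) = false ∧ y (i-2) = false ∧ y (i-1) = true ∧ y i = false ∧ y (i+1) = false) ∨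
  (y (i-4) = false ∧ y (i-3) = false ∧ y (i-2) = true ∧ y (i-1) = false ∧ y i = false)

/-- The `k`-fold concatenation of a configuration of length `n`. -/
def concatK {n : ℕ} (k : ℕ) (x : ZMod n → Bool) : ZMod (k*n) → Bool :=
  fun i => x ((i.val : ZMod n))

/-- Boolean test for a box, given the five relevant cells. -/
def boxb (a b c d e : Bool) : Bool := a && !b && c && !d && !e

/-- Boolean test for a switch at `i`, given the cells `i-2, …, i+4`. -/
def swb (a b c d e f g : Bool) : Bool :=
  boxb c d e f g || (xor c d && !boxb b c d e f && !boxb a b c d e && !boxb c d e f g)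

/-- Curried form of the local rule. -/
def locb (w0 w1 w2 w3 w4 w5 w6 w7 w8 : Bool) : Bool :=
  xor ((w1 && w2 && w3 && !w4 && !w5) ||
  (w0 && w1 && w2 && !w3 && !w4) ||
  (!w1 && !w2 && w3 && !w4 && !w5) ||
  (!w0 && !w1 && w2 && !w3 && !w4) ||
  (!w3 && w4 && w5 && !w6) ||
  (!w2 && w3 && w4 && !w5) ||
  (!w1 && !w2 && w3 && !w4 && w5 && !w6) ||
  (!w2 && !w3 && w4 && !w5 && w6 && !w7) ||
  (w3 && w4 && w5 && !w6 && w7) ||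
  (w0 && w1 && w2 && !w3 && w4 && !w5) ||
  (w0 && w1 && w2 && !w3 && w4 && w5 && w6) ||
  (w2 && w3 && w4 && !w5 && w6 && w7 && !w8)) w4

/-- The potential (flow of switches between neighbouring cells). -/
def phib (x0 x1 x2 x3 x4 x5 x6 x7 x8 : Bool) : ℕ :=
  (bif x5 then (bif x7 then (bif x3 then (bif x4 then (bif x6 then 1 else (bif x2 then 0 else
    (bif x1 then (bif x0 then 1 else 0) else 0))) else (bif x2 then (bif x8 then (bif x1 then
    (bif x6 then 2 else 0) else 1) else 2) else 1)) else (bif x8 then 1 else (bif x6 then 1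
    else 2))) else (bif x6 then (bif x8 then (bif x4 then (bif x3 then 0 else (bif x2 then (bif
    x1 then (bif x0 then 2 else 1) else 0) else 0)) else 2) else (bif x4 then 1 else 0)) else
    (bif x4 then (bif x3 then 1 else 0) else (bif x3 then (bif x1 then (bif x2 then 1 else (bif
    x0 then 2 else 1)) else 2) else 1)))) else (bif x4 then (bif x6 then (bif x8 then (bif x2
    then 1 else (bif x3 then 2 else (bif x7 then 1 else 0))) else (bif x7 then 1 else (bif x3
    then (bif x2 then 1 else 3) else (bif x2 then (bif x1 then (bif x0 then 3 else 2) else 1)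
    else 2)))) else (bif x3 then (bif x2 then 2 else 1) else (bif x2 then 1 else 2))) else (bif
    x3 then (bif x2 then (bif x1 then (bif x6 then (bif x8 then (bif x7 then 0 else 2) else
    (bif x7 then 2 else 0)) else 2) else 1) else (bif x1 then 1 else (bif x6 then (bif x8 then
    (bif x7 then 0 else 2) else (bif x7 then 2 else 0)) else 2))) else 1)))

/-- Boolean universal quantifier over `Bool`. -/
def forBool (f : Bool → Bool) : Bool := f true && f false

theorem forBool_spec {f : Bool → Bool} (h : forBool f = true) (b : Bool) : f b = true := by
  cases b <;> simp_all [forBool]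

/-- Force evaluation of a Boolean argument. -/
def forceB (b : Bool) (g : Bool → Bool) : Bool := bif b then g true else g false

theorem forceB_eq (b : Bool) (g : Bool → Bool) : forceB b g = g b := by cases b <;> rfl

/-- The complete finite check of the local inequality. -/
def fullCheck : Bool :=
  forBool fun x0 => forBool fun x1 => forBool fun x2 => forBool fun x3 => forBool fun x4 => forBool fun x5 => forBool fun x6 => forBool fun x7 => forBool fun x8 => forBool fun x9 => forBool fun x10 =>
    (Nat.ble (phib x2 x3 x4 x5 x6 x7 x8 x9 x10 + 1)
      ((swb x4 x5 x6 x7 x8 x9 x10).toNat + phib x1 x2 x3 x4 x5 x6 x7 x8 x9)) ||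
    (Nat.ble (phib x2 x3 x4 x5 x6 x7 x8 x9 x10)
      ((swb x4 x5 x6 x7 x8 x9 x10).toNat + phib x1 x2 x3 x4 x5 x6 x7 x8 x9) &&
    forceB (locb x0 x1 x2 x3 x4 x5 x6 x7 x8) fun y4 => forceB (locb x1 x2 x3 x4 x5 x6 x7 x8 x9) fun y5 =>
    forceB (locb x2 x3 x4 x5 x6 x7 x8 x9 x10) fun y6 =>
    forBool fun x11 => forceB (locb x3 x4 x5 x6 x7 x8 x9 x10 x11) fun y7 =>
    forBool fun x12 => forceB (locb x4 x5 x6 x7 x8 x9 x10 x11 x12) fun y8 =>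
    forBool fun x13 => forceB (locb x5 x6 x7 x8 x9 x10 x11 x12 x13) fun y9 =>
    forBool fun x14 => forceB (locb x6 x7 x8 x9 x10 x11 x12 x13 x14) fun y10 =>
      !swb y4 y5 y6 y7 y8 y9 y10)

set_option maxRecDepth 100000 in
theorem fullCheck_true : fullCheck = true := by decide +kernel

theorem local_ineq (x0 x1 x2 x3 x4 x5 x6 x7 x8 x9 x10 x11 x12 x13 x14 : Bool) :
    (swb (locb x0 x1 x2 x3 x4 x5 x6 x7 x8) (locb x1 x2 x3 x4 x5 x6 x7 x8 x9) (locb x2 x3 x4 x5 x6 x7 x8 x9 x10) (locb x3 x4 x5 x6 x7 x8 x9 x10 x11) (locb x4 x5 x6 x7 x8 x9 x10 x11 x12) (locb x5 x6 x7 x8 x9 x10 x11 x12 x13) (locb x6 x7 x8 x9 x10 x11 x12 x13 x14)).toNat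
      + phib x2 x3 x4 x5 x6 x7 x8 x9 x10 ≤ (swb x4 x5 x6 x7 x8 x9 x10).toNat + phib x1 x2 x3 x4 x5 x6 x7 x8 x9 := by
  have h := fullCheck_true
  unfold fullCheck at h
  replace h := forBool_spec h x0
  replace h := forBool_spec h x1
  replace h := forBool_spec h x2
  replace h := forBool_spec h x3
  replace h := forBool_spec h x4
  replace h := forBool_spec h x5
  replace h := forBool_spec h x6
  replace h := forBool_spec h x7
  replace h := forBool_spec h x8
  replace h := forBool_spec h x9
  replace h := forBool_spec h x10
  simp only [Bool.or_eq_true, Bool.and_eq_true, Nat.ble_eq] at h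
  rcases h with h | ⟨h1, h⟩
  · have := Bool.toNat_le (swb (locb x0 x1 x2 x3 x4 x5 x6 x7 x8) (locb x1 x2 x3 x4 x5 x6 x7 x8 x9) (locb x2 x3 x4 x5 x6 x7 x8 x9 x10) (locb x3 x4 x5 x6 x7 x8 x9 x10 x11) (locb x4 x5 x6 x7 x8 x9 x10 x11 x12) (locb x5 x6 x7 x8 x9 x10 x11 x12 x13) (locb x6 x7 x8 x9 x10 x11 x12 x13 x14))
    omega
  · simp only [forceB_eq] at h
    replace h := forBool_spec h x11
    replace h := forBool_spec h x12
    replace h := forBool_spec h x13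
    replace h := forBool_spec h x14
    simp only [Bool.not_eq_true'] at h
    rw [h]
    simpa using h1

theorem isBox_iff {n : ℕ} (x : ZMod n → Bool) (i : ZMod n) :
    IsBox x i ↔ boxb (x (i-1)) (x i) (x (i+1)) (x (i+2)) (x (i+3)) = true := by
  simp [IsBox, boxb, and_assoc]

theorem inBox_iff {n : ℕ} (x : ZMod n → Bool) (j : ZMod n) :
    InBox x j ↔ IsBox x j ∨ IsBox x (j-1) := by
  constructor
  · rintro ⟨i, hi, rfl | rfl⟩
    · exact Or.inl hi
    · right; simpa using hi
  · rintro (h | h)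
    · exact ⟨j, h, Or.inl rfl⟩
    · exact ⟨j-1, h, Or.inr (by ring)⟩

/-- The Boolean switch indicator of a configuration. -/
def swAt {n : ℕ} (x : ZMod n → Bool) (i : ZMod n) : Bool :=
  swb (x (i-2)) (x (i-1)) (x i) (x (i+1)) (x (i+2)) (x (i+3)) (x (i+4))

theorem isSwitch_iff {n : ℕ} (x : ZMod n → Bool) (i : ZMod n) :
    IsSwitch x i ↔ swAt x i = true := by
  have e1 : i + 1 - 1 = i := by ring
  have e2 : i + 1 + 1 = i + 2 := by ring
  have e3 : i + 1 + 2 = i + 3 := by ring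
  have e4 : i + 1 + 3 = i + 4 := by ring
  have e5 : i - 1 - 1 = i - 2 := by ring
  have e6 : i - 1 + 1 = i := by ring
  have e7 : i - 1 + 2 = i + 1 := by ring
  have e8 : i - 1 + 3 = i + 2 := by ring
  simp only [IsSwitch, inBox_iff, isBox_iff, swAt, swb, e1, e2, e3, e4, e5, e6, e7, e8]
  generalize x (i-2) = a
  generalize x (i-1) = b
  generalize x i = c
  generalize x (i+1) = d
  generalize x (i+2) = e
  generalize x (i+3) = f
  generalize x (i+4) = g
  revert a b c d e f g
  decide

theorem switchCount_eq {n : ℕ} [NeZero n] (x : ZMod n → Bool) :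
    switchCount x = ∑ i : ZMod n, (swAt x i).toNat := by
  classical
  unfold switchCount
  rw [Nat.card_congr (Equiv.subtypeEquivRight (isSwitch_iff x)), Nat.card_eq_fintype_card,
    Fintype.card_subtype, Finset.card_filter]
  refine Finset.sum_congr rfl fun i _ => ?_
  cases swAt x i <;> simp

theorem bfoGlobal_eq {n : ℕ} (x : ZMod n → Bool) (i : ZMod n) :
    bfoGlobal x i = locb (x (i-4)) (x (i-3)) (x (i-2)) (x (i-1)) (x i) (x (i+1)) (x (i+2)) (x (i+3)) (x (i+4)) := by
  have h : bfoGlobal x i = locb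
      (x (i + ((0 : ℕ) : ZMod n) - ((4 : ℕ) : ZMod n)))
      (x (i + ((1 : ℕ) : ZMod n) - ((4 : ℕ) : ZMod n)))
      (x (i + ((2 : ℕ) : ZMod n) - ((4 : ℕ) : ZMod n)))
      (x (i + ((3 : ℕ) : ZMod n) - ((4 : ℕ) : ZMod n)))
      (x (i + ((4 : ℕ) : ZMod n) - ((4 : ℕ) : ZMod n)))
      (x (i + ((5 : ℕ) : ZMod n) - ((4 : ℕ) : ZMod n)))
      (x (i + ((6 : ℕ) : ZMod n) - ((4 : ℕ) : ZMod n)))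
      (x (i + ((7 : ℕ) : ZMod n) - ((4 : ℕ) : ZMod n)))
      (x (i + ((8 : ℕ) : ZMod n) - ((4 : ℕ) : ZMod n))) := rfl
  rw [h]
  congr 2 <;> push_cast <;> ring

/-- The potential of a configuration at a position. -/
def phiAt {n : ℕ} (x : ZMod n → Bool) (i : ZMod n) : ℕ :=
  phib (x (i-5)) (x (i-4)) (x (i-3)) (x (i-2)) (x (i-1)) (x i) (x (i+1)) (x (i+2)) (x (i+3))

theorem step_ineq {n : ℕ} (x : ZMod n → Bool) (i : ZMod n) :
    (swAt (bfoGlobal x) i).toNat + phiAt x (i+1) ≤ (swAt x i).toNat + phiAt x i := by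
  have h := local_ineq (x (i-6)) (x (i-5)) (x (i-4)) (x (i-3)) (x (i-2)) (x (i-1)) (x i) (x (i+1)) (x (i+2)) (x (i+3)) (x (i+4)) (x (i+5)) (x (i+6)) (x (i+7)) (x (i+8))
  unfold swAt phiAt
  simp only [bfoGlobal_eq]
  convert h using 3 <;> ring_nf

/-- For the corrected BFO rule the switch count is non-increasing. -/
theorem bfo_switchCount_nonincreasing (n : ℕ) (hn : Odd n) (x : ZMod n → Bool) :
    switchCount (bfoGlobal x) ≤ switchCount x := by
  have : NeZero n := ⟨hn.pos.ne'⟩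
  rw [switchCount_eq, switchCount_eq]
  have h := Finset.sum_le_sum fun i (_ : i ∈ (Finset.univ : Finset (ZMod n))) => step_ineq x i
  rw [Finset.sum_add_distrib, Finset.sum_add_distrib] at h
  have e : ∑ i : ZMod n, phiAt x (i+1) = ∑ i : ZMod n, phiAt x i :=
    Equiv.sum_comp (Equiv.addRight (1 : ZMod n)) (phiAt x)
  omega
end

section
/- If x ∈ X_s (constant switch count under the corrected BFO rule), then x contains none of the blocks 0110100 (D_{5,6}^b), 1110100 (D_{9,10}^b), 111010100 (D_{9,10}^{rb}), 1110111 (D_{9,11}), or 1110110100 (D_{9,12}^b). -/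
namespace BFO

/-! ### Local machinery on `ℤ`-indexed configurations -/

/-- The local rule with explicit arguments. -/
def loc (a b c d e f g h i : Bool) : Bool :=
  xor ((b && c && d && !e && !f) ||
  (a && b && c && !d && !e) ||
  (!b && !c && d && !e && !f) ||
  (!a && !b && c && !d && !e) ||
  (!d && e && f && !g) ||
  (!c && d && e && !f) ||
  (!b && !c && d && !e && f && !g) ||
  (!c && !d && e && !f && g && !h) ||
  (d && e && f && !g && h) ||
  (a && b && c && !d && e && !f) ||
  (a && b && c && !d && e && f && g) ||
  (c && d && e && !f && g && h && !i)) e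

/-- The global rule on bi-infinite configurations. -/
def FZ (u : ℤ → Bool) (p : ℤ) : Bool :=
  loc (u (p-4)) (u (p-3)) (u (p-2)) (u (p-1)) (u p) (u (p+1)) (u (p+2)) (u (p+3)) (u (p+4))

/-- A wall: a transition 01 which is not a box. -/
def wall (u : ℤ → Bool) (w : ℤ) : Bool :=
  !u (w-1) && u w && !(u (w-2) && !u (w+1) && !u (w+2))

/-- A front: a transition 10 which is not the end of a box. -/
def front (u : ℤ → Bool) (e : ℤ) : Bool :=
  u (e-1) && !u e && !(u (e-3) && !u (e-2) && !u (e+1))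

/-- A front that starts a box. -/
def box (u : ℤ → Bool) (e : ℤ) : Bool :=
  u (e-1) && !u e && u (e+1) && !u (e+2) && !u (e+3)

/-- A blocked front. -/
def blk (u : ℤ → Bool) (e : ℤ) : Bool :=
  !u (e-2) && u (e-1) && !u e && u (e+1) && !(!u (e+2) && !u (e+3))

/-- Displacement of a wall. -/
def gsh (u : ℤ → Bool) (w : ℤ) : ℕ :=
  bif wall (FZ u) w then 0 else bif wall (FZ u) (w+1) then 1 else
  bif wall (FZ u) (w+2) then 2 else bif wall (FZ u) (w+3) then 3 else 9

/-- Displacement of a front, shifted by two. -/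
def hsh (u : ℤ → Bool) (e : ℤ) : ℕ :=
  bif front (FZ u) e then 2 else bif front (FZ u) (e+2) then 4 else
  bif front (FZ u) (e-2) then 0 else 9

/-- The wall at `w` survives one step. -/
def sv (u : ℤ → Bool) (w : ℤ) : Bool :=
  wall (FZ u) w || (!wall u (w+1) && (wall (FZ u) (w+1) ||
    (!wall u (w+2) && (wall (FZ u) (w+2) || (!wall u (w+3) && wall (FZ u) (w+3))))))

/-! Windows -/

def win (u : ℤ → Bool) : ℤ → ℕ → List Bool
  | _, 0 => []
  | p, L+1 => u p :: win u (p+1) L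

theorem win_length (u : ℤ → Bool) (L : ℕ) : ∀ p, (win u p L).length = L := by
  induction L with
  | zero => intro p; rfl
  | succ L ih => intro p; simp [win, ih]

theorem win_drop (u : ℤ → Bool) : ∀ (i L : ℕ) (p : ℤ),
    (win u p L).drop i = win u (p+i) (L-i) := by
  intro i
  induction i with
  | zero => intro L p; simp
  | succ i ih =>
    intro L p
    cases L with
    | zero => simp [win]
    | succ L =>
      simp only [win, List.drop_succ_cons, ih]
      congr 1
      · push_cast; ring
      · omega

def goF (a b c d e f g h : Bool) : List Bool → List Bool
  | [] => []
  | i :: t => loc a b c d e f g h i :: goF b c d e f g h i t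

def Fl : List Bool → List Bool
  | a :: b :: c :: d :: e :: f :: g :: h :: t => goF a b c d e f g h t
  | _ => []

theorem goF_win (u : ℤ → Bool) (L : ℕ) : ∀ p : ℤ,
    goF (u (p-4)) (u (p-3)) (u (p-2)) (u (p-1)) (u p) (u (p+1)) (u (p+2)) (u (p+3))
      (win u (p+4) L) = win (FZ u) p L := by
  induction L with
  | zero => intro p; rfl
  | succ L ih =>
    intro p
    have h := ih (p+1)
    rw [show p+1-4 = p-3 by ring, show p+1-3 = p-2 by ring, show p+1-2 = p-1 by ring,
      show p+1-1 = p by ring, show p+1+1 = p+2 by ring, show p+1+2 = p+3 by ring,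
      show p+1+3 = p+4 by ring, show p+1+4 = p+4+1 by ring] at h
    simp only [win, goF]
    rw [h]
    rfl

theorem Fl_win (u : ℤ → Bool) (p : ℤ) (L : ℕ) (hL : 8 ≤ L) :
    Fl (win u p L) = win (FZ u) (p+4) (L-8) := by
  obtain ⟨M, rfl⟩ := Nat.exists_eq_add_of_le' hL
  have h := goF_win u M (p+4)
  rw [show p+4-4 = p by ring, show p+4-3 = p+1 by ring, show p+4-2 = p+1+1 by ring,
      show p+4-1 = p+1+1+1 by ring, show p+4+1 = p+1+1+1+1+1 by ring,
      show p+4+2 = p+1+1+1+1+1+1 by ring,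
      show p+4+3 = p+1+1+1+1+1+1+1 by ring, show p+4+4 = p+1+1+1+1+1+1+1+1 by ring] at h
  rw [show M + 8 - 8 = M by omega, ← h]
  simp only [win, Fl]
  rw [show p+4 = p+1+1+1+1 by ring]

def wallAt (l : List Bool) (i : ℕ) : Bool :=
  match l.drop (i-2) with
  | a :: b :: c :: d :: e :: _ => !b && c && !(a && !d && !e)
  | _ => false

def frontAt (l : List Bool) (i : ℕ) : Bool :=
  match l.drop (i-3) with
  | a :: b :: c :: d :: e :: _ => c && !d && !(a && !b && !e)
  | _ => false

def boxAt (l : List Bool) (i : ℕ) : Bool :=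
  match l.drop (i-1) with
  | a :: b :: c :: d :: e :: _ => a && !b && c && !d && !e
  | _ => false

def blkAt (l : List Bool) (i : ℕ) : Bool :=
  match l.drop (i-2) with
  | a :: b :: c :: d :: e :: f :: _ => !a && b && !c && d && !(!e && !f)
  | _ => false

theorem wallAt_win (u : ℤ → Bool) (p : ℤ) (L i : ℕ) (h : 2 ≤ i ∧ i + 3 ≤ L) :
    wallAt (win u p L) i = wall u (p+i) := by
  obtain ⟨i, rfl⟩ := Nat.exists_eq_add_of_le' h.1
  obtain ⟨M, rfl⟩ := Nat.exists_eq_add_of_le' h.2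
  rw [wallAt, win_drop, show M + (i + 2 + 3) - (i + 2 - 2) = M + 5 by omega,
    show i + 2 - 2 = i by omega]
  simp only [win, wall]
  rw [show p + ((i+2 : ℕ) : ℤ) = p + i + 1 + 1 by push_cast; ring]
  ring_nf

theorem frontAt_win (u : ℤ → Bool) (p : ℤ) (L i : ℕ) (h : 3 ≤ i ∧ i + 2 ≤ L) :
    frontAt (win u p L) i = front u (p+i) := by
  obtain ⟨i, rfl⟩ := Nat.exists_eq_add_of_le' h.1
  obtain ⟨M, rfl⟩ := Nat.exists_eq_add_of_le' h.2
  rw [frontAt, win_drop, show M + (i + 3 + 2) - (i + 3 - 3) = M + 5 by omega,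
    show i + 3 - 3 = i by omega]
  simp only [win, front]
  rw [show p + ((i+3 : ℕ) : ℤ) = p + i + 1 + 1 + 1 by push_cast; ring]
  ring_nf

theorem boxAt_win (u : ℤ → Bool) (p : ℤ) (L i : ℕ) (h : 1 ≤ i ∧ i + 4 ≤ L) :
    boxAt (win u p L) i = box u (p+i) := by
  obtain ⟨i, rfl⟩ := Nat.exists_eq_add_of_le' h.1
  obtain ⟨M, rfl⟩ := Nat.exists_eq_add_of_le' h.2
  rw [boxAt, win_drop, show M + (i + 1 + 4) - (i + 1 - 1) = M + 5 by omega,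
    show i + 1 - 1 = i by omega]
  simp only [win, box]
  rw [show p + ((i+1 : ℕ) : ℤ) = p + i + 1 by push_cast; ring]
  ring_nf

theorem blkAt_win (u : ℤ → Bool) (p : ℤ) (L i : ℕ) (h : 2 ≤ i ∧ i + 4 ≤ L) :
    blkAt (win u p L) i = blk u (p+i) := by
  obtain ⟨i, rfl⟩ := Nat.exists_eq_add_of_le' h.1
  obtain ⟨M, rfl⟩ := Nat.exists_eq_add_of_le' h.2
  rw [blkAt, win_drop, show M + (i + 2 + 4) - (i + 2 - 2) = M + 6 by omega,
    show i + 2 - 2 = i by omega]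
  simp only [win, blk]
  rw [show p + ((i+2 : ℕ) : ℤ) = p + i + 1 + 1 by push_cast; ring]
  ring_nf

/-- Displacement functions on the image window `y`. -/
def gAt (y : List Bool) (i : ℕ) : ℕ :=
  bif wallAt y i then 0 else bif wallAt y (i+1) then 1 else
  bif wallAt y (i+2) then 2 else bif wallAt y (i+3) then 3 else 9

def hAt (y : List Bool) (i : ℕ) : ℕ :=
  bif frontAt y i then 2 else bif frontAt y (i+2) then 4 else
  bif frontAt y (i-2) then 0 else 9

theorem gAt_win (u : ℤ → Bool) (p : ℤ) (L i : ℕ) (h : 2 ≤ i ∧ i + 6 ≤ L) :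
    gAt (win (FZ u) p L) i = gsh u (p+i) := by
  rw [gAt, gsh, wallAt_win _ _ _ _ (by omega), wallAt_win _ _ _ _ (by omega),
    wallAt_win _ _ _ _ (by omega), wallAt_win _ _ _ _ (by omega)]
  push_cast
  simp only [add_assoc]

theorem hAt_win (u : ℤ → Bool) (p : ℤ) (L i : ℕ) (h : 5 ≤ i ∧ i + 4 ≤ L) :
    hAt (win (FZ u) p L) i = hsh u (p+i) := by
  rw [hAt, hsh, frontAt_win _ _ _ _ (by omega), frontAt_win _ _ _ _ (by omega),
    frontAt_win _ _ _ _ (by omega), show ((i-2 : ℕ) : ℤ) = (i:ℤ) - 2 by omega]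
  push_cast
  simp only [add_assoc, add_sub_assoc]

/-! Search -/

def pre : List Bool → List Bool → Bool
  | [], _ => true
  | _ :: _, [] => false
  | true :: s, b :: t => bif b then pre s t else false
  | false :: s, b :: t => bif b then false else pre s t

def bad : List (List Bool) → List Bool → Bool
  | [], _ => false
  | f :: fs, l => bif pre f l then true else bad fs l

def fit (u : ℤ → Bool) : ℤ → List (Option Bool) → Prop
  | _, [] => True
  | p, none :: t => fit u (p+1) t
  | p, some b :: t => u p = b ∧ fit u (p+1) t

/-- `u` contains none of the words in `fs`. -/
def Avoid (fs : List (List Bool)) (u : ℤ → Bool) : Prop :=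
  ∀ f ∈ fs, ∀ p, win u p f.length ≠ f

theorem pre_win (u : ℤ → Bool) : ∀ (f : List Bool) (p : ℤ) (k : ℕ),
    pre f (win u p k) = true → win u p f.length = f := by
  intro f
  induction f with
  | nil => intro p k _; rfl
  | cons b f ih =>
    intro p k h
    cases k with
    | zero => cases b <;> simp [win, pre] at h
    | succ k =>
      cases b <;> cases hu : u p <;> simp [win, pre, hu] at h <;>
        simp [win, hu, ih _ _ h]

theorem bad_win {fs : List (List Bool)} {u : ℤ → Bool} (h : Avoid fs u) (p : ℤ) (k : ℕ) :
    bad fs (win u p k) = false := by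
  induction fs with
  | nil => rfl
  | cons f fs ih =>
    have h1 : pre f (win u p k) = false := by
      by_contra hc
      exact h f (by simp) p (pre_win u f p k (by simpa using hc))
    simp only [bad, h1, cond_false]
    exact ih (fun g hg => h g (by simp [hg]))

/-! Search, with the forbidden words arranged in a tree -/

inductive Tr
  | bd : Tr
  | ok : Tr
  | nd : Tr → Tr → Tr

def ins : List Bool → Tr → Tr
  | [], _ => Tr.bd
  | _ :: _, Tr.bd => Tr.bd
  | true :: f, Tr.ok => Tr.nd Tr.ok (ins f Tr.ok)
  | false :: f, Tr.ok => Tr.nd (ins f Tr.ok) Tr.ok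
  | true :: f, Tr.nd a b => Tr.nd a (ins f b)
  | false :: f, Tr.nd a b => Tr.nd (ins f a) b

def insAll : List (List Bool) → Tr
  | [] => Tr.ok
  | f :: fs => ins f (insAll fs)

def nd (a b : List Bool → Bool) (l : List Bool) : Bool :=
  match l with
  | [] => false
  | x :: t => bif x then b t else a t

def bd (_ : List Bool) : Bool := true
def ok (_ : List Bool) : Bool := false

def den : Tr → List Bool → Bool
  | Tr.bd => bd
  | Tr.ok => ok
  | Tr.nd a b => nd (den a) (den b)

theorem den_ins : ∀ (f : List Bool) (t : Tr) (l : List Bool),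
    den (ins f t) l = true → pre f l = true ∨ den t l = true := by
  intro f
  induction f with
  | nil => intro t l _; left; rfl
  | cons c f ih =>
    intro t l h
    cases l with
    | nil => cases t <;> cases c <;> simp_all [ins, den, nd, bd]
    | cons x l =>
      cases t <;> cases c <;> cases x <;> simp_all [ins, den, nd, bd, pre, ok]
      · simpa [den, ok] using ih _ _ h
      · simpa [den, ok] using ih _ _ h

theorem den_insAll (fs : List (List Bool)) (l : List Bool) (h : den (insAll fs) l = true) :
    bad fs l = true := by
  induction fs with
  | nil => simp [insAll, den, ok] at h
  | cons f fs ih =>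
    rcases den_ins _ _ _ h with h | h
    · simp [bad, h]
    · simp [bad, ih h]

def brT (T : List Bool → Bool) (k : List Bool → Bool) : Option Bool → List Bool → Bool
  | some b, l => bif T (b :: l) then true else k (b :: l)
  | none, l => bif (bif T (false :: l) then true else k (false :: l)) then
      (bif T (true :: l) then true else k (true :: l)) else false

def srT (T : List Bool → Bool) : List (Option Bool) → (List Bool → Bool) → Bool
  | [], k => k []
  | o :: t, k => srT T t (brT T k o)

theorem srT_sound {T : List Bool → Bool} {u : ℤ → Bool} (h : ∀ p k, T (win u p k) = false) :
    ∀ (tm : List (Option Bool)) (k : List Bool → Bool) (p : ℤ), fit u p tm →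
      srT T tm k = true → k (win u p tm.length) = true := by
  intro tm
  induction tm with
  | nil => intro k p _ hs; exact hs
  | cons o t ih =>
    intro k p hf hs
    have hb := h p (t.length + 1)
    simp only [win] at hb
    cases o with
    | none =>
      have := ih _ (p+1) hf hs
      simp only [brT] at this
      simp only [List.length_cons, win]
      cases hu : u p <;> simp [hu] at hb <;> simp [hb] at this
      · exact this.1
      · exact this.2
    | some b =>
      have := ih _ (p+1) hf.2 hs
      simp only [brT] at this
      simp only [List.length_cons, win]
      have hu := hf.1
      rw [hu] at hb ⊢
      simpa [hb] using this

def srch (fs : List (List Bool)) (tm : List (Option Bool)) (k : List Bool → Bool) : Bool :=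
  srT (den (insAll fs)) tm k

theorem den_win {fs : List (List Bool)} {u : ℤ → Bool} (h : Avoid fs u) (p : ℤ) (k : ℕ) :
    den (insAll fs) (win u p k) = false := by
  by_contra hc
  have := den_insAll fs _ (by simpa using hc)
  rw [bad_win h] at this
  simp at this

theorem srch_sound {fs : List (List Bool)} {u : ℤ → Bool} (h : Avoid fs u)
    (tm : List (Option Bool)) (k : List Bool → Bool) (p : ℤ) (hf : fit u p tm)
    (hs : srch fs tm k = true) : k (win u p tm.length) = true :=
  srT_sound (den_win h) tm k p hf hs

theorem fit_append (u : ℤ → Bool) (t : List (Option Bool)) : ∀ (s : List (Option Bool)) (p : ℤ),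
    fit u p s → fit u (p + s.length) t → fit u p (s ++ t) := by
  intro s
  induction s with
  | nil => intro p _ h; simpa using h
  | cons o s ih =>
    intro p h1 h2
    have h2' : fit u (p + 1 + s.length) t := by
      convert h2 using 1
      push_cast [List.length_cons]; ring
    cases o with
    | none => exact ih (p+1) h1 h2'
    | some b => exact ⟨h1.1, ih (p+1) h1.2 h2'⟩

theorem fit_none (u : ℤ → Bool) (n : ℕ) : ∀ p, fit u p (List.replicate n none) := by
  induction n with
  | zero => intro p; trivial
  | succ n ih => intro p; exact ih (p+1)

theorem fit_word (u : ℤ → Bool) : ∀ (f : List Bool) (p : ℤ), win u p f.length = f →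
    fit u p (f.map some) := by
  intro f
  induction f with
  | nil => intro p _; trivial
  | cons b f ih =>
    intro p h
    simp only [List.length_cons, win, List.cons.injEq] at h
    exact ⟨h.1, ih _ h.2⟩

/-- Template: a word with `a` free cells before and `b` free cells after. -/
def tmpl (a : ℕ) (f : List Bool) (b : ℕ) : List (Option Bool) :=
  List.replicate a none ++ (f.map some ++ List.replicate b none)

theorem fit_tmpl (u : ℤ → Bool) (a : ℕ) (f : List Bool) (b : ℕ) (p : ℤ)
    (h : win u (p+a) f.length = f) : fit u p (tmpl a f b) := by
  refine fit_append _ _ _ _ (fit_none _ _ _) ?_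
  rw [List.length_replicate]
  exact fit_append _ _ _ _ (fit_word _ _ _ h) (fit_none _ _ _)

/-- Survival of a wall on the level of windows (`i` is the index in `l`). -/
def svAt (l : List Bool) (y : List Bool) (i : ℕ) : Bool :=
  wallAt y (i-4) || (!wallAt l (i+1) && (wallAt y (i-3) ||
    (!wallAt l (i+2) && (wallAt y (i-2) || (!wallAt l (i+3) && wallAt y (i-1))))))

def B0 (l : List Bool) : Bool := wallAt l 6 && !svAt l (Fl l) 6

theorem svAt_win (u : ℤ → Bool) (p : ℤ) :
    svAt (win u p 16) (Fl (win u p 16)) 6 = sv u (p+6) := by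
  rw [Fl_win _ _ _ (by norm_num)]
  simp only [svAt, sv]
  rw [wallAt_win _ _ _ _ (by norm_num), wallAt_win _ _ _ _ (by norm_num),
    wallAt_win _ _ _ _ (by norm_num), wallAt_win _ _ _ _ (by norm_num),
    wallAt_win _ _ _ _ (by norm_num), wallAt_win _ _ _ _ (by norm_num),
    wallAt_win _ _ _ _ (by norm_num)]
  norm_num [add_assoc]

/-- One more forbidden word, from the survival of all walls. -/
theorem avoid_step {fs : List (List Bool)} {u : ℤ → Bool} (h : Avoid fs u)
    (hs : ∀ w, wall u w = true → sv u w = true) (f : List Bool) (a b : ℕ)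
    (hl : (tmpl a f b).length = 16)
    (hc : srch fs (tmpl a f b) B0 = true) : Avoid (f :: fs) u := by
  intro g hg p
  rcases List.mem_cons.1 hg with rfl | hg
  · intro hw
    have h1 := srch_sound h (tmpl a g b) B0 (p - a) (fit_tmpl _ _ _ _ _ (by simpa using hw)) hc
    rw [hl] at h1
    simp only [B0, Bool.and_eq_true, Bool.not_eq_true', svAt_win] at h1
    rw [wallAt_win _ _ _ _ (by norm_num)] at h1
    have := hs _ h1.1
    push_cast at this
    rw [this] at h1
    simp at h1
  · exact h g hg p

def W1 : List (List Bool) := [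
  [true, true, true, false, false, false, true, true, true, false, true, true, false],
  [false, false, true, false, false, false, true, true, true, false, true, true, false],
  [false, false, true, false, false, false, true, false, true, true, false],
  [true, true, false, false, false, true, false, true, true, false],
  [false, false, true, false, false, true, false, true, true],
  [true, false, true, true, true, false, true, true, false],
  [false, false, true, false, false, true, true, true],
  [true, true, false, false, true, false, true, true],
  [true, true, false, true, false, true, false, true],
  [false, false, true, false, false, true, false, false],
  [true, true, false, false, true, true, true],
  [true, true, false, true, false, true, true],
  [false, true, true, false, true, false, true],
  [false, false, true, false, true, false, true],
  [true, true, false, false, true, false, false],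
  [false, true, true, false, true, true],
  [false, true, true, false, false]]

theorem avoid_W1 {u : ℤ → Bool} (hs : ∀ w, wall u w = true → sv u w = true) : Avoid W1 u := by
  have h0 : Avoid [] u := by intro f hf; simp at hf
  have h1 := avoid_step h0 hs [false, true, true, false, false] 5 6 rfl (by decide +kernel)
  have h2 := avoid_step h1 hs [false, true, true, false, true, true] 5 5 rfl (by decide +kernel)
  have h3 := avoid_step h2 hs [true, true, false, false, true, false, false] 2 7 rfl
    (by decide +kernel)
  have h4 := avoid_step h3 hs [false, false, true, false, true, false, true] 2 7 rfl
    (by decide +kernel)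
  have h5 := avoid_step h4 hs [false, true, true, false, true, false, true] 5 4 rfl
    (by decide +kernel)
  have h6 := avoid_step h5 hs [true, true, false, true, false, true, true] 3 6 rfl
    (by decide +kernel)
  have h7 := avoid_step h6 hs [true, true, false, false, true, true, true] 2 7 rfl
    (by decide +kernel)
  have h8 := avoid_step h7 hs [false, false, true, false, false, true, false, false] 1 7 rfl
    (by decide +kernel)
  have h9 := avoid_step h8 hs [true, true, false, true, false, true, false, true] 3 5 rfl
    (by decide +kernel)
  have h10 := avoid_step h9 hs [true, true, false, false, true, false, true, true] 2 6 rfl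
    (by decide +kernel)
  have h11 := avoid_step h10 hs [false, false, true, false, false, true, true, true] 1 7 rfl
    (by decide +kernel)
  have h12 := avoid_step h11 hs [true, false, true, true, true, false, true, true, false] 4 3 rfl
    (by decide +kernel)
  have h13 := avoid_step h12 hs [false, false, true, false, false, true, false, true, true] 1 6 rfl
    (by decide +kernel)
  have h14 := avoid_step h13 hs [true, true, false, false, false, true, false, true, true, false]
    1 5 rfl (by decide +kernel)
  have h15 := avoid_step h14 hs
    [false, false, true, false, false, false, true, false, true, true, false] 0 5 rfl
    (by decide +kernel)
  have h16 := avoid_step h15 hs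
    [false, false, true, false, false, false, true, true, true, false, true, true, false] 0 3 rfl
    (by decide +kernel)
  have h17 := avoid_step h16 hs
    [true, true, true, false, false, false, true, true, true, false, true, true, false] 0 3 rfl
    (by decide +kernel)
  exact h17


/-! ### Further forbidden words -/

theorem local_check {fs : List (List Bool)} {u : ℤ → Bool} (h : Avoid fs u)
    (K : List Bool → List Bool → Bool) (a : ℕ) (f : List Bool) (b L : ℕ) (p : ℤ)
    (hl : (tmpl a f b).length = L + 8)
    (hc : srch fs (tmpl a f b) (fun l => K l (Fl l)) = true)
    (hw : win u (p+a) f.length = f) :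
    K (win u p (L+8)) (win (FZ u) (p+4) L) = true := by
  have h1 := srch_sound h (tmpl a f b) _ p (fit_tmpl _ _ _ _ _ hw) hc
  rw [hl] at h1
  rwa [Fl_win _ _ _ (by omega)] at h1

theorem avoid_nil (u : ℤ → Bool) : Avoid [] u := by intro f hf; simp at hf

theorem avoid_cons {fs : List (List Bool)} {u : ℤ → Bool} {f : List Bool} (h : Avoid fs u)
    (hf : ∀ p, win u p f.length ≠ f) : Avoid (f :: fs) u := by
  intro g hg
  rcases List.mem_cons.1 hg with rfl | hg
  · exact hf
  · exact h g hg

/-- some word of `fs` occurs in `l` -/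
def occ (fs : List (List Bool)) : List Bool → Bool
  | [] => false
  | b :: l => bif den (insAll fs) (b :: l) then true else occ fs l

theorem occ_win {fs : List (List Bool)} {u : ℤ → Bool} (h : Avoid fs u) :
    ∀ (L : ℕ) (p : ℤ), occ fs (win u p L) = false := by
  intro L
  induction L with
  | zero => intro p; rfl
  | succ L ih =>
    intro p
    have := den_win h p (L+1)
    simp only [win] at this ⊢
    simp only [occ, this, ih, cond_false]

theorem avoid_two {u : ℤ → Bool} (h : Avoid W1 u) (h' : Avoid W1 (FZ u)) :
    ∀ p, win u p 6 ≠ [false, false, true, false, true, false] := by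
  intro p hw
  have := local_check h (fun _ y => occ W1 y) 5 [false, false, true, false, true, false] 8 11
    (p-5) rfl (by decide +kernel) (by simpa using hw)
  rw [occ_win h'] at this
  simp at this

theorem avoid_alt {u : ℤ → Bool} (h : Avoid W1 u) {n : ℕ} (hn : Odd n)
    (hp : ∀ p, u (p + n) = u p) :
    ∀ p, win u p 6 ≠ [false, true, false, true, false, true] := by
  have hstep : ∀ p, win u p 6 = [false, true, false, true, false, true] →
      win u (p-2) 6 = [false, true, false, true, false, true] := by
    intro p hw
    have h1 := h [false, false, true, false, true, false, true] (by simp [W1]) (p-1)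
    have h2 := h [true, true, false, true, false, true, false, true] (by simp [W1]) (p-2)
    simp only [List.length_cons, List.length_nil, win, sub_add_cancel,
      show p-2+1 = p-1 by ring] at hw h1 h2 ⊢
    simp only [List.cons.injEq, and_true] at hw h1 h2 ⊢
    simp only [hw] at h1 h2 ⊢
    revert h1 h2
    cases u (p-1) <;> cases u (p-2) <;> simp
  have hall : ∀ (j : ℕ) p, win u p 6 = [false, true, false, true, false, true] →
      win u (p-2*j) 6 = [false, true, false, true, false, true] := by
    intro j
    induction j with
    | zero => intro p hw; simpa using hw
    | succ j ih =>
      intro p hw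
      have := hstep _ (ih p hw)
      rwa [show p - 2*(j:ℤ) - 2 = p - 2*((j+1:ℕ):ℤ) by push_cast; ring] at this
  intro p hw
  obtain ⟨k, rfl⟩ := hn
  have h1 := hall (k+1) p hw
  have h2 := hp (p - 2*((k+1:ℕ):ℤ) + 1)
  rw [show p - 2*((k+1:ℕ):ℤ) + 1 + ((2*k+1:ℕ):ℤ) = p by push_cast; ring] at h2
  simp only [win, List.cons.injEq] at h1 hw
  rw [hw.1, h1.2.1] at h2
  simp at h2

def W2 : List (List Bool) := [false, false, true, false, true, false] ::
  [false, true, false, true, false, true] :: W1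

theorem avoid_W2 {u : ℤ → Bool} (h : Avoid W1 u) (h' : Avoid W1 (FZ u)) {n : ℕ} (hn : Odd n)
    (hp : ∀ p, u (p + n) = u p) : Avoid W2 u :=
  avoid_cons (avoid_cons h (avoid_alt h hn hp)) (avoid_two h h')



/-! ### Local lemmas -/

theorem wall_win {u : ℤ → Bool} {w : ℤ} (h : wall u w = true) :
    win u (w-1) 2 = [false, true] := by
  simp [wall] at h
  simp [win, h]

theorem front_win {u : ℤ → Bool} {w : ℤ} (h : front u w = true) :
    win u (w-1) 2 = [true, false] := by
  simp [front] at h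
  simp [win, h]

def KR (l y : List Bool) : Bool :=
  !wallAt l 6 || gAt y 2 == 0 || (gAt y 2 == 1 && frontAt l 5) ||
    (gAt y 2 == 2 && frontAt l 5 && (frontAt l 7 || frontAt l 9)) ||
    (gAt y 2 == 3 && frontAt l 8)

/-- How a wall moves. -/
theorem loc_R {u : ℤ → Bool} (h : Avoid W2 u) {w : ℤ} (hw : wall u w = true) :
    gsh u w = 0 ∨ (gsh u w = 1 ∧ front u (w-1) = true) ∨
    (gsh u w = 2 ∧ front u (w-1) = true ∧ (front u (w+1) = true ∨ front u (w+3) = true)) ∨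
    (gsh u w = 3 ∧ front u (w+2) = true) := by
  have h1 := local_check h KR 5 [false, true] 9 8 (w-6) rfl (by decide +kernel)
    (by have := wall_win hw; rwa [show w - 1 = w - 6 + (5:ℕ) by push_cast; ring] at this)
  unfold KR at h1
  rw [wallAt_win _ _ _ _ (by norm_num), gAt_win _ _ _ _ (by norm_num),
    frontAt_win _ _ _ _ (by norm_num), frontAt_win _ _ _ _ (by norm_num),
    frontAt_win _ _ _ _ (by norm_num), frontAt_win _ _ _ _ (by norm_num)] at h1
  rw [show w - 6 + 4 + ((2:ℕ):ℤ) = w by push_cast; ring,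
    show w - 6 + ((6:ℕ):ℤ) = w by push_cast; ring,
    show w - 6 + ((5:ℕ):ℤ) = w - 1 by push_cast; ring,
    show w - 6 + ((7:ℕ):ℤ) = w + 1 by push_cast; ring,
    show w - 6 + ((8:ℕ):ℤ) = w + 2 by push_cast; ring,
    show w - 6 + ((9:ℕ):ℤ) = w + 3 by push_cast; ring, hw] at h1
  simp only [Bool.or_eq_true, Bool.and_eq_true, beq_iff_eq, Bool.not_true, Bool.false_eq_true,
    false_or] at h1
  tauto

def KF (l y : List Bool) : Bool :=
  !frontAt l 9 || hAt y 5 == 0 || hAt y 5 == 2 || hAt y 5 == 4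

theorem loc_F {u : ℤ → Bool} (h : Avoid W2 u) {e : ℤ} (he : front u e = true) :
    hsh u e = 0 ∨ hsh u e = 2 ∨ hsh u e = 4 := by
  have h1 := local_check h KF 8 [true, false] 7 9 (e-9) rfl (by decide +kernel)
    (by have := front_win he; rwa [show e - 1 = e - 9 + (8:ℕ) by push_cast; ring] at this)
  unfold KF at h1
  rw [frontAt_win _ _ _ _ (by norm_num), hAt_win _ _ _ _ (by norm_num)] at h1
  rw [show e - 9 + 4 + ((5:ℕ):ℤ) = e by push_cast; ring,
    show e - 9 + ((9:ℕ):ℤ) = e by push_cast; ring, he] at h1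
  simp only [Bool.or_eq_true, beq_iff_eq, Bool.not_true, Bool.false_eq_true, false_or] at h1
  tauto

def KO1 (l y : List Bool) : Bool :=
  !(frontAt l 7 && wallAt l 8 && frontAt y 5 && wallAt y 4) || frontAt y 3

theorem loc_O1 {u : ℤ → Bool} (h : Avoid W2 u) {e : ℤ} (he : front u e = true)
    (hw : wall u (e+1) = true) (he' : front (FZ u) (e+2) = true)
    (hw' : wall (FZ u) (e+1) = true) : front (FZ u) e = true := by
  have h1 := local_check h KO1 6 [true, false] 7 7 (e-7) rfl (by decide +kernel)
    (by have := front_win he; rwa [show e - 1 = e - 7 + (6:ℕ) by push_cast; ring] at this)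
  unfold KO1 at h1
  rw [frontAt_win _ _ _ _ (by norm_num), frontAt_win _ _ _ _ (by norm_num),
    frontAt_win _ _ _ _ (by norm_num), wallAt_win _ _ _ _ (by norm_num),
    wallAt_win _ _ _ _ (by norm_num)] at h1
  rw [show e - 7 + 4 + ((5:ℕ):ℤ) = e + 2 by push_cast; ring,
    show e - 7 + 4 + ((4:ℕ):ℤ) = e + 1 by push_cast; ring,
    show e - 7 + 4 + ((3:ℕ):ℤ) = e by push_cast; ring,
    show e - 7 + ((7:ℕ):ℤ) = e by push_cast; ring,
    show e - 7 + ((8:ℕ):ℤ) = e + 1 by push_cast; ring, he, hw, he', hw'] at h1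
  simpa using h1

/-- Template with some free cells inside. -/
def tmplO (a : ℕ) (f : List (Option Bool)) (b : ℕ) : List (Option Bool) :=
  List.replicate a none ++ (f ++ List.replicate b none)

theorem local_checkO {fs : List (List Bool)} {u : ℤ → Bool} (h : Avoid fs u)
    (K : List Bool → List Bool → Bool) (a : ℕ) (f : List (Option Bool)) (b L : ℕ) (p : ℤ)
    (hl : (tmplO a f b).length = L + 8)
    (hc : srch fs (tmplO a f b) (fun l => K l (Fl l)) = true)
    (hw : fit u (p+a) f) :
    K (win u p (L+8)) (win (FZ u) (p+4) L) = true := by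
  have hf : fit u p (tmplO a f b) := by
    refine fit_append _ _ _ _ (fit_none _ _ _) ?_
    rw [List.length_replicate]
    exact fit_append _ _ _ _ hw (fit_none _ _ _)
  have h1 := srch_sound h (tmplO a f b) _ p hf hc
  rw [hl] at h1
  rwa [Fl_win _ _ _ (by omega)] at h1

/-- Lower bound for the displacement of a front (shifted by two). -/
def hAt' (y : List Bool) (i : ℕ) : ℕ :=
  bif frontAt y i then 2 else bif frontAt y (i+2) then 4 else 0

def hsh' (u : ℤ → Bool) (e : ℤ) : ℕ :=
  bif front (FZ u) e then 2 else bif front (FZ u) (e+2) then 4 else 0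

theorem hAt'_win (u : ℤ → Bool) (p : ℤ) (L i : ℕ) (h : 3 ≤ i ∧ i + 4 ≤ L) :
    hAt' (win (FZ u) p L) i = hsh' u (p+i) := by
  rw [hAt', hsh', frontAt_win _ _ _ _ (by omega), frontAt_win _ _ _ _ (by omega)]
  push_cast
  simp only [add_assoc]

theorem hsh'_eq {u : ℤ → Bool} (h : Avoid W2 u) {e : ℤ} (he : front u e = true) :
    hsh u e = hsh' u e := by
  have h1 := loc_F h he
  revert h1
  unfold hsh hsh'
  cases front (FZ u) e <;> cases front (FZ u) (e+2) <;> cases front (FZ u) (e-2) <;> simp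

def KO21 (l y : List Bool) : Bool :=
  !(frontAt l 7 && wallAt l 6) || Nat.ble (gAt y 2 + 2) (hAt' y 3)

theorem loc_O21 {u : ℤ → Bool} (h : Avoid W2 u) {e : ℤ} (he : front u e = true)
    (hw : wall u (e-1) = true) : gsh u (e-1) + 2 ≤ hsh u e := by
  have h1 := local_checkO h KO21 5 [some false, some true, some false] 8 8
    (e-7) rfl (by decide +kernel) (by
      rw [show e - 7 + ((5:ℕ):ℤ) = e - 2 by push_cast; ring]
      have hw' := hw
      have he' := he
      simp only [wall, front, Bool.and_eq_true, Bool.not_eq_true'] at hw' he'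
      rw [show e - 1 - 1 = e - 2 by ring] at hw'
      simp only [fit]
      rw [show e - 2 + 1 = e - 1 by ring]
      simp [hw', he'])
  unfold KO21 at h1
  rw [frontAt_win _ _ _ _ (by norm_num), hAt'_win _ _ _ _ (by norm_num),
    wallAt_win _ _ _ _ (by norm_num), gAt_win _ _ _ _ (by norm_num)] at h1
  rw [show e - 7 + 4 + ((3:ℕ):ℤ) = e by push_cast; ring,
    show e - 7 + 4 + ((2:ℕ):ℤ) = e - 1 by push_cast; ring,
    show e - 7 + ((7:ℕ):ℤ) = e by push_cast; ring,
    show e - 7 + ((6:ℕ):ℤ) = e - 1 by push_cast; ring, he, hw, ← hsh'_eq h he] at h1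
  simpa using h1

def KO22 (l y : List Bool) : Bool :=
  !(frontAt l 8 && wallAt l 6) || Nat.ble (gAt y 2 + 1) (hAt' y 4)

theorem loc_O22 {u : ℤ → Bool} (h : Avoid W2 u) {e : ℤ} (he : front u e = true)
    (hw : wall u (e-2) = true) : gsh u (e-2) + 1 ≤ hsh u e := by
  have h1 := local_checkO h KO22 5 [some false, some true, some true, some false] 7 8
    (e-8) rfl (by decide +kernel) (by
      rw [show e - 8 + ((5:ℕ):ℤ) = e - 3 by push_cast; ring]
      have hw' := hw
      have he' := he
      simp only [wall, front, Bool.and_eq_true, Bool.not_eq_true'] at hw' he'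
      rw [show e - 2 - 1 = e - 3 by ring] at hw'
      simp only [fit]
      rw [show e - 3 + 1 = e - 2 by ring]
      rw [show e - 2 + 1 = e - 1 by ring]
      simp [hw', he'])
  unfold KO22 at h1
  rw [frontAt_win _ _ _ _ (by norm_num), hAt'_win _ _ _ _ (by norm_num),
    wallAt_win _ _ _ _ (by norm_num), gAt_win _ _ _ _ (by norm_num)] at h1
  rw [show e - 8 + 4 + ((4:ℕ):ℤ) = e by push_cast; ring,
    show e - 8 + 4 + ((2:ℕ):ℤ) = e - 2 by push_cast; ring,
    show e - 8 + ((8:ℕ):ℤ) = e by push_cast; ring,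
    show e - 8 + ((6:ℕ):ℤ) = e - 2 by push_cast; ring, he, hw, ← hsh'_eq h he] at h1
  simpa using h1

def KO23 (l y : List Bool) : Bool :=
  !(frontAt l 9 && wallAt l 6) || Nat.ble (gAt y 2) (hAt' y 5)

theorem loc_O23 {u : ℤ → Bool} (h : Avoid W2 u) {e : ℤ} (he : front u e = true)
    (hw : wall u (e-3) = true) : gsh u (e-3) ≤ hsh u e := by
  have h1 := local_checkO h KO23 5 [some false, some true, none, some true, some false] 7 9
    (e-9) rfl (by decide +kernel) (by
      rw [show e - 9 + ((5:ℕ):ℤ) = e - 4 by push_cast; ring]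
      have hw' := hw
      have he' := he
      simp only [wall, front, Bool.and_eq_true, Bool.not_eq_true'] at hw' he'
      rw [show e - 3 - 1 = e - 4 by ring] at hw'
      simp only [fit]
      rw [show e - 4 + 1 = e - 3 by ring]
      rw [show e - 3 + 1 = e - 2 by ring]
      rw [show e - 2 + 1 = e - 1 by ring]
      simp [hw', he'])
  unfold KO23 at h1
  rw [frontAt_win _ _ _ _ (by norm_num), hAt'_win _ _ _ _ (by norm_num),
    wallAt_win _ _ _ _ (by norm_num), gAt_win _ _ _ _ (by norm_num)] at h1
  rw [show e - 9 + 4 + ((5:ℕ):ℤ) = e by push_cast; ring,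
    show e - 9 + 4 + ((2:ℕ):ℤ) = e - 3 by push_cast; ring,
    show e - 9 + ((9:ℕ):ℤ) = e by push_cast; ring,
    show e - 9 + ((6:ℕ):ℤ) = e - 3 by push_cast; ring, he, hw, ← hsh'_eq h he] at h1
  simpa using h1

def KO24 (l y : List Bool) : Bool :=
  !(frontAt l 10 && wallAt l 6) || Nat.ble (gAt y 2) (hAt' y 6 + 1)

theorem loc_O24 {u : ℤ → Bool} (h : Avoid W2 u) {e : ℤ} (he : front u e = true)
    (hw : wall u (e-4) = true) : gsh u (e-4) ≤ hsh u e + 1 := by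
  have h1 := local_checkO h KO24 5 [some false, some true, none, none, some true, some false] 7 10
    (e-10) rfl (by decide +kernel) (by
      rw [show e - 10 + ((5:ℕ):ℤ) = e - 5 by push_cast; ring]
      have hw' := hw
      have he' := he
      simp only [wall, front, Bool.and_eq_true, Bool.not_eq_true'] at hw' he'
      rw [show e - 4 - 1 = e - 5 by ring] at hw'
      simp only [fit]
      rw [show e - 5 + 1 = e - 4 by ring]
      rw [show e - 4 + 1 = e - 3 by ring]
      rw [show e - 3 + 1 = e - 2 by ring]
      rw [show e - 2 + 1 = e - 1 by ring]
      simp [hw', he'])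
  unfold KO24 at h1
  rw [frontAt_win _ _ _ _ (by norm_num), hAt'_win _ _ _ _ (by norm_num),
    wallAt_win _ _ _ _ (by norm_num), gAt_win _ _ _ _ (by norm_num)] at h1
  rw [show e - 10 + 4 + ((6:ℕ):ℤ) = e by push_cast; ring,
    show e - 10 + 4 + ((2:ℕ):ℤ) = e - 4 by push_cast; ring,
    show e - 10 + ((10:ℕ):ℤ) = e by push_cast; ring,
    show e - 10 + ((6:ℕ):ℤ) = e - 4 by push_cast; ring, he, hw, ← hsh'_eq h he] at h1
  simpa using h1

def KP (l y : List Bool) : Bool :=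
  !frontAt l 7 ||
  bif boxAt l 7 then
    (frontAt y 3 && !boxAt y 3) || (!frontAt y 3 && (!frontAt y 5 || !boxAt y 5))
  else (!frontAt y 3 && frontAt y 5 && !boxAt y 5) || blkAt l 7 || (wallAt l 8 && !wallAt y 4)

theorem loc_P {u : ℤ → Bool} (h : Avoid W2 u) {e : ℤ} (he : front u e = true) :
    (box u e = true → hsh u e = 0 ∨ (hsh u e = 2 ∧ box (FZ u) e = false) ∨
      (hsh u e = 4 ∧ box (FZ u) (e+2) = false)) ∧
    (box u e = false → (hsh u e = 4 ∧ box (FZ u) (e+2) = false) ∨ blk u e = true ∨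
      (wall u (e+1) = true ∧ wall (FZ u) (e+1) = false)) := by
  have h1 := local_check h KP 6 [true, false] 9 9 (e-7) rfl (by decide +kernel)
    (by have := front_win he; rwa [show e - 1 = e - 7 + (6:ℕ) by push_cast; ring] at this)
  unfold KP at h1
  rw [frontAt_win _ _ _ _ (by norm_num), frontAt_win _ _ _ _ (by norm_num),
    frontAt_win _ _ _ _ (by norm_num),
    wallAt_win _ _ _ _ (by norm_num), wallAt_win _ _ _ _ (by norm_num),
    boxAt_win _ _ _ _ (by norm_num), boxAt_win _ _ _ _ (by norm_num),
    boxAt_win _ _ _ _ (by norm_num), blkAt_win _ _ _ _ (by norm_num)] at h1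
  rw [show e - 7 + 4 + ((3:ℕ):ℤ) = e by push_cast; ring,
    show e - 7 + 4 + ((4:ℕ):ℤ) = e + 1 by push_cast; ring,
    show e - 7 + 4 + ((5:ℕ):ℤ) = e + 2 by push_cast; ring,
    show e - 7 + ((7:ℕ):ℤ) = e by push_cast; ring,
    show e - 7 + ((8:ℕ):ℤ) = e + 1 by push_cast; ring, he] at h1
  rw [hsh'_eq h he]
  unfold hsh'
  revert h1
  cases box u e <;> cases front (FZ u) e <;> cases front (FZ u) (e+2) <;> simp <;> tauto

def KB (l y : List Bool) : Bool := !(blkAt l 6 && wallAt y 3) || blkAt y 2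

theorem loc_B {u : ℤ → Bool} (h : Avoid W2 u) {e : ℤ} (he : blk u e = true)
    (hw : wall (FZ u) (e+1) = true) : blk (FZ u) e = true := by
  have h1 := local_check h KB 4 [false, true, false, true] 6 6 (e-6) rfl (by decide +kernel)
    (by
      rw [show e - 6 + ((4:ℕ):ℤ) = e - 2 by push_cast; ring]
      simp [blk] at he
      simp [win, he, show e - 2 + 1 = e - 1 by ring])
  unfold KB at h1
  rw [blkAt_win _ _ _ _ (by norm_num), blkAt_win _ _ _ _ (by norm_num),
    wallAt_win _ _ _ _ (by norm_num)] at h1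
  rw [show e - 6 + 4 + ((2:ℕ):ℤ) = e by push_cast; ring,
    show e - 6 + 4 + ((3:ℕ):ℤ) = e + 1 by push_cast; ring,
    show e - 6 + ((6:ℕ):ℤ) = e by push_cast; ring, he, hw] at h1
  simpa using h1

/-! Checks that need no forbidden words -/

def KC (l y : List Bool) : Bool :=
  !wallAt y 2 || wallAt l 6 || wallAt l 5 || wallAt l 4 || wallAt l 3

theorem loc_C (u : ℤ → Bool) {v : ℤ} (hv : wall (FZ u) v = true) :
    wall u v = true ∨ wall u (v-1) = true ∨ wall u (v-2) = true ∨ wall u (v-3) = true := by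
  have h1 := local_check (avoid_nil u) KC 0 [] 13 5 (v-6) rfl (by decide +kernel) rfl
  unfold KC at h1
  rw [wallAt_win _ _ _ _ (by norm_num), wallAt_win _ _ _ _ (by norm_num),
    wallAt_win _ _ _ _ (by norm_num), wallAt_win _ _ _ _ (by norm_num),
    wallAt_win _ _ _ _ (by norm_num)] at h1
  rw [show v - 6 + 4 + ((2:ℕ):ℤ) = v by push_cast; ring,
    show v - 6 + ((6:ℕ):ℤ) = v by push_cast; ring,
    show v - 6 + ((5:ℕ):ℤ) = v - 1 by push_cast; ring,
    show v - 6 + ((4:ℕ):ℤ) = v - 2 by push_cast; ring,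
    show v - 6 + ((3:ℕ):ℤ) = v - 3 by push_cast; ring, hv] at h1
  simp only [Bool.or_eq_true, Bool.not_true, Bool.false_eq_true, false_or] at h1
  tauto

def KI (l y : List Bool) : Bool :=
  !wallAt l 6 ||
    (!(wallAt y 2 && !wallAt l 8 && (wallAt y 4 || (!wallAt l 9 && wallAt y 5))) &&
     !(wallAt y 3 && !wallAt l 8 && !wallAt l 9 && wallAt y 5))

theorem loc_I (u : ℤ → Bool) {w : ℤ} (hw : wall u w = true) :
    (wall (FZ u) w = true → wall u (w+2) = false → wall (FZ u) (w+2) = false) ∧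
    (wall (FZ u) w = true → wall u (w+2) = false → wall u (w+3) = false →
      wall (FZ u) (w+3) = false) ∧
    (wall (FZ u) (w+1) = true → wall u (w+2) = false → wall u (w+3) = false →
      wall (FZ u) (w+3) = false) := by
  have h1 := local_check (avoid_nil u) KI 5 [false, true] 9 8 (w-6) rfl (by decide +kernel)
    (by have := wall_win hw; rwa [show w - 1 = w - 6 + (5:ℕ) by push_cast; ring] at this)
  unfold KI at h1
  rw [wallAt_win _ _ _ _ (by norm_num), wallAt_win _ _ _ _ (by norm_num),
    wallAt_win _ _ _ _ (by norm_num), wallAt_win _ _ _ _ (by norm_num),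
    wallAt_win _ _ _ _ (by norm_num), wallAt_win _ _ _ _ (by norm_num),
    wallAt_win _ _ _ _ (by norm_num)] at h1
  rw [show w - 6 + 4 + ((2:ℕ):ℤ) = w by push_cast; ring,
    show w - 6 + 4 + ((3:ℕ):ℤ) = w + 1 by push_cast; ring,
    show w - 6 + 4 + ((4:ℕ):ℤ) = w + 2 by push_cast; ring,
    show w - 6 + 4 + ((5:ℕ):ℤ) = w + 3 by push_cast; ring,
    show w - 6 + ((6:ℕ):ℤ) = w by push_cast; ring,
    show w - 6 + ((8:ℕ):ℤ) = w + 2 by push_cast; ring,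
    show w - 6 + ((9:ℕ):ℤ) = w + 3 by push_cast; ring, hw] at h1
  revert h1
  cases wall (FZ u) w <;> cases wall (FZ u) (w+1) <;> cases wall (FZ u) (w+2) <;>
    cases wall (FZ u) (w+3) <;> cases wall u (w+2) <;> simp

/-- Two adjacent cells are not both walls. -/
theorem wall_adj {u : ℤ → Bool} {w : ℤ} (h : wall u w = true) : wall u (w+1) = false := by
  simp only [wall, Bool.and_eq_true] at h
  simp [wall, h]

/-- The origin of a wall of the image. -/
theorem wall_orig (u : ℤ → Bool) {v : ℤ} (hv : wall (FZ u) v = true) :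
    ∃ d : ℕ, d ≤ 3 ∧ wall u (v-d) = true ∧
      (∀ j : ℕ, j < d → wall u (v-j) = false) ∧
      (∀ j : ℕ, j < d → wall (FZ u) (v-d+j) = false) := by
  have hadj : ∀ {u : ℤ → Bool} {w : ℤ}, wall u (w+1) = true → wall u w = false := by
    intro u w h
    by_contra hc
    rw [wall_adj (by simpa using hc)] at h
    simp at h
  have hv1 : wall (FZ u) (v-1) = false := hadj (by simpa using hv)
  cases h0 : wall u v
  · cases h1 : wall u (v-1)
    · cases h2 : wall u (v-2)
      · have h3 : wall u (v-3) = true := by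
          have := loc_C u hv
          simpa [h0, h1, h2] using this
        obtain ⟨-, a2, a3⟩ := loc_I u h3
        rw [show v - 3 + 1 = v - 2 by ring, show v - 3 + 2 = v - 1 by ring,
          show v - 3 + 3 = v by ring] at *
        refine ⟨3, le_rfl, h3, ?_, ?_⟩
        · intro j hj
          interval_cases j <;> simp_all
        · intro j hj
          interval_cases j
          · push_cast
            rw [add_zero]
            by_contra hc
            rw [a2 (by simpa using hc) h1 h0] at hv
            simp at hv
          · push_cast
            rw [show v - 3 + 1 = v - 2 by ring]
            by_contra hc
            rw [a3 (by simpa using hc) h1 h0] at hv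
            simp at hv
          · push_cast
            rwa [show v - 3 + 2 = v - 1 by ring]
      · obtain ⟨a1, -, -⟩ := loc_I u h2
        rw [show v - 2 + 2 = v by ring] at *
        refine ⟨2, by norm_num, h2, ?_, ?_⟩
        · intro j hj
          interval_cases j <;> simp_all
        · intro j hj
          interval_cases j
          · push_cast
            rw [add_zero]
            by_contra hc
            rw [a1 (by simpa using hc) h0] at hv
            simp at hv
          · push_cast
            rwa [show v - 2 + 1 = v - 1 by ring]
    · refine ⟨1, by norm_num, h1, ?_, ?_⟩
      · intro j hj
        interval_cases j; simpa using h0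
      · intro j hj
        interval_cases j; simpa using hv1
  · refine ⟨0, by norm_num, by simpa using h0, by simp, by simp⟩

/-- Every wall of the image comes from a wall. -/
theorem loc_S (u : ℤ → Bool) {v : ℤ} (hv : wall (FZ u) v = true) :
    ∃ d : ℕ, d ≤ 3 ∧ wall u (v-d) = true ∧ gsh u (v-d) = d := by
  obtain ⟨d, hd, h1, -, h3⟩ := wall_orig u hv
  refine ⟨d, hd, h1, ?_⟩
  interval_cases d
  · simp [gsh, hv]
  · have := h3 0 (by norm_num)
    push_cast at this
    rw [add_zero] at this
    simp [gsh, this, hv]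
  · have a := h3 0 (by norm_num)
    have b := h3 1 (by norm_num)
    push_cast at a b
    rw [add_zero] at a
    simp [gsh, a, b, hv]
  · have a := h3 0 (by norm_num)
    have b := h3 1 (by norm_num)
    have c := h3 2 (by norm_num)
    push_cast at a b c
    rw [add_zero] at a
    simp [gsh, a, b, c, hv]


/-! ### Alternation of walls and fronts -/

theorem last_before {P : ℤ → Prop} {a b : ℤ} (hab : a < b) (ha : P a) :
    ∃ p, a ≤ p ∧ p < b ∧ P p ∧ ∀ r, p < r → r < b → ¬ P r := by
  obtain ⟨p, ⟨h1, h2⟩, h3⟩ := Int.exists_greatest_of_bdd (P := fun z => P z ∧ z < b)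
    ⟨b, fun z hz => hz.2.le⟩ ⟨a, ha, hab⟩
  exact ⟨p, h3 a ⟨ha, hab⟩, h2, h1, fun r hr hb hP => by have := h3 r ⟨hP, hb⟩; omega⟩

theorem front_iff {u : ℤ → Bool} {e : ℤ} : front u e = true ↔
    u (e-1) = true ∧ u e = false ∧ ¬ (u (e-3) = true ∧ u (e-2) = false ∧ u (e+1) = false) := by
  simp only [front]
  cases u (e-1) <;> cases u e <;> cases u (e-3) <;> cases u (e-2) <;> cases u (e+1) <;> simp

theorem wall_iff {u : ℤ → Bool} {w : ℤ} : wall u w = true ↔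
    u (w-1) = false ∧ u w = true ∧ ¬ (u (w-2) = true ∧ u (w+1) = false ∧ u (w+2) = false) := by
  simp only [wall]
  cases u (w-1) <;> cases u w <;> cases u (w-2) <;> cases u (w+1) <;> cases u (w+2) <;> simp

theorem blk_iff {u : ℤ → Bool} {e : ℤ} : blk u e = true ↔
    u (e-2) = false ∧ u (e-1) = true ∧ u e = false ∧ u (e+1) = true ∧
      ¬ (u (e+2) = false ∧ u (e+3) = false) := by
  simp only [blk]
  cases u (e-1) <;> cases u e <;> cases u (e-2) <;> cases u (e+1) <;> cases u (e+2) <;>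
    cases u (e+3) <;> simp

theorem wf_ne {u : ℤ → Bool} {w e : ℤ} (hw : wall u w = true) (he : front u e = true) :
    w ≠ e := by
  rintro rfl
  have h1 := (wall_iff.1 hw).2.1
  rw [(front_iff.1 he).2.1] at h1
  simp at h1

theorem alt1 {u : ℤ → Bool} {a b : ℤ} (ha : front u a = true) (hb : front u b = true)
    (hab : a < b) : ∃ w, wall u w = true ∧ a < w ∧ w < b := by
  obtain ⟨a1, a2, a3⟩ := front_iff.1 ha
  obtain ⟨b1, b2, b3⟩ := front_iff.1 hb
  obtain ⟨p, h1, h2, h3, h4⟩ := last_before (P := fun z => u z = false) hab a2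
  have hp : p ≠ b - 1 := by
    rintro rfl
    simp [b1] at h3
  have h5 : u (p+1) = true := by simpa using h4 (p+1) (by omega) (by omega)
  refine ⟨p+1, wall_iff.2 ⟨by simpa using h3, h5, ?_⟩, by omega, by omega⟩
  rintro ⟨c1, c2, c3⟩
  have hb' : b = p + 2 := by
    by_contra hne
    have := h4 (p+2) (by omega) (by omega)
    rw [show p + 1 + 1 = p + 2 by ring] at c2
    exact this c2
  subst hb'
  apply b3
  rw [show p + 2 - 3 = p + 1 - 2 by ring, show p + 2 - 2 = p by ring,
    show p + 2 + 1 = p + 1 + 2 by ring]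
  exact ⟨c1, h3, c3⟩

theorem alt2 {u : ℤ → Bool} {a b : ℤ} (ha : wall u a = true) (hb : wall u b = true)
    (hab : a < b) : ∃ e, front u e = true ∧ a < e ∧ e < b := by
  obtain ⟨a1, a2, a3⟩ := wall_iff.1 ha
  obtain ⟨b1, b2, b3⟩ := wall_iff.1 hb
  obtain ⟨p, h1, h2, h3, h4⟩ := last_before (P := fun z => u z = true) hab a2
  have hp : p ≠ b - 1 := by
    rintro rfl
    simp [b1] at h3
  have h5 : u (p+1) = false := by simpa using h4 (p+1) (by omega) (by omega)
  by_cases hf : front u (p+1) = true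
  · exact ⟨p+1, hf, by omega, by omega⟩
  · have h6 : u (p-2) = true ∧ u (p-1) = false ∧ u (p+2) = false := by
      rw [front_iff] at hf
      rw [show p + 1 - 1 = p by ring, show p + 1 - 3 = p - 2 by ring,
        show p + 1 - 2 = p - 1 by ring, show p + 1 + 1 = p + 2 by ring] at hf
      by_contra hc
      exact hf ⟨h3, h5, hc⟩
    obtain ⟨d1, d2, d3⟩ := h6
    have hpa : p ≠ a := by
      rintro rfl
      exact a3 ⟨d1, h5, d3⟩
    have hpa' : p - 1 ≠ a := by
      intro hh
      rw [← hh, d2] at a2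
      simp at a2
    refine ⟨p-1, front_iff.2 ⟨by rwa [show p - 1 - 1 = p - 2 by ring], d2, ?_⟩,
      by omega, by omega⟩
    rintro ⟨-, -, c⟩
    rw [sub_add_cancel, h3] at c
    simp at c

/-- A blocked front is followed by a wall. -/
theorem blk_wall {u : ℤ → Bool} {e : ℤ} (h : blk u e = true) : wall u (e+1) = true := by
  obtain ⟨h1, h2, h3, h4, h5⟩ := blk_iff.1 h
  refine wall_iff.2 ⟨by simpa using h3, h4, ?_⟩
  rintro ⟨-, c1, c2⟩
  exact h5 ⟨by rwa [show e + 2 = e + 1 + 1 by ring], by rwa [show e + 3 = e + 1 + 2 by ring]⟩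

/-- The closest front on the left of a wall. -/
theorem adj_front {u : ℤ → Bool} {w e : ℤ} (hw : wall u w = true) (he : front u e = true)
    (hew : e < w) : ∃ f, front u f = true ∧ f < w ∧ ∀ v, wall u v = true → f < v → w ≤ v := by
  obtain ⟨p, h1, h2, h3, h4⟩ := last_before (P := fun z => front u z = true) hew he
  refine ⟨p, h3, h2, fun v hv hpv => ?_⟩
  by_contra hc
  obtain ⟨f, f1, f2, f3⟩ := alt2 hv hw (by omega)
  exact h4 f (by omega) f3 f1

/-! ### Motion of walls and fronts -/

/-- New position of a wall. -/
def nw (u : ℤ → Bool) (w : ℤ) : ℤ := w + gsh u w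

/-- New position of a front. -/
def nf (u : ℤ → Bool) (e : ℤ) : ℤ := e + hsh u e - 2

theorem gsh_le {u : ℤ → Bool} (h : Avoid W2 u) {w : ℤ} (hw : wall u w = true) :
    gsh u w ≤ 3 := by
  rcases loc_R h hw with h | h | h | h <;> omega

theorem nw_wall {u : ℤ → Bool} (h : Avoid W2 u) {w : ℤ} (hw : wall u w = true) :
    wall (FZ u) (nw u w) = true := by
  have h1 := gsh_le h hw
  revert h1
  unfold nw gsh
  cases h0 : wall (FZ u) w <;> cases h1 : wall (FZ u) (w+1) <;> cases h2 : wall (FZ u) (w+2) <;>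
    cases h3 : wall (FZ u) (w+3) <;> simp [*]

theorem nf_front {u : ℤ → Bool} (h : Avoid W2 u) {e : ℤ} (he : front u e = true) :
    front (FZ u) (nf u e) = true := by
  have h1 := loc_F h he
  revert h1
  unfold nf hsh
  cases h0 : front (FZ u) e <;> cases h1 : front (FZ u) (e+2) <;>
    cases h2 : front (FZ u) (e-2) <;> simp [*]
  all_goals rw [show e + 4 - 2 = e + 2 by ring]; exact h1

theorem nf_even {u : ℤ → Bool} (h : Avoid W2 u) {e : ℤ} (he : front u e = true) :
    ∃ k : ℤ, nf u e = e + 2 * k := by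
  unfold nf
  rcases loc_F h he with h | h | h <;> rw [h]
  · exact ⟨-1, by push_cast; ring⟩
  · exact ⟨0, by push_cast; ring⟩
  · exact ⟨1, by push_cast; ring⟩

theorem nw_orig (u : ℤ → Bool) {v : ℤ} (hv : wall (FZ u) v = true) :
    ∃ w, wall u w = true ∧ nw u w = v := by
  obtain ⟨d, -, h1, h2⟩ := loc_S u hv
  exact ⟨v - d, h1, by rw [nw, h2]; ring⟩

theorem ord1 {u : ℤ → Bool} (h : Avoid W2 u) {e w : ℤ} (he : front u e = true)
    (hw : wall u w = true) (hew : e < w) : nf u e < nw u w := by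
  have h1 := nw_wall h hw
  have h2 := nf_front h he
  have h3 := wf_ne h1 h2
  rcases loc_F h he with h4 | h4 | h4
  · unfold nf nw; omega
  · unfold nf nw; omega
  · by_contra hc
    have h5 : w = e + 1 ∧ gsh u w = 0 := by
      unfold nf nw at *; omega
    obtain ⟨rfl, h6⟩ := h5
    have e1 : nf u e = e + 2 := by unfold nf; omega
    have e2 : nw u (e+1) = e + 1 := by unfold nw; omega
    rw [e1] at h2
    rw [e2] at h1
    have := loc_O1 h he hw h2 h1
    simp [hsh, this] at h4

theorem ord2 {u : ℤ → Bool} (h : Avoid W2 u) {e w : ℤ} (he : front u e = true)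
    (hw : wall u w = true) (hew : w < e) : nw u w < nf u e := by
  have h1 := nw_wall h hw
  have h2 := nf_front h he
  have h3 := wf_ne h1 h2
  have h4 := gsh_le h hw
  unfold nw nf at *
  by_cases c1 : w = e - 1
  · subst c1; have := loc_O21 h he hw; omega
  by_cases c2 : w = e - 2
  · subst c2; have := loc_O22 h he hw; omega
  by_cases c3 : w = e - 3
  · subst c3; have := loc_O23 h he hw; omega
  by_cases c4 : w = e - 4
  · subst c4; have := loc_O24 h he hw; omega
  omega

/-! ### Good configurations -/

/-- Periodic, and all walls survive forever. -/
structure Good (n : ℕ) (u : ℤ → Bool) : Prop where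
  per : ∀ p, u (p + n) = u p
  sur : ∀ t w, wall (FZ^[t] u) w = true → sv (FZ^[t] u) w = true

theorem Good.step {n : ℕ} {u : ℤ → Bool} (h : Good n u) : Good n (FZ u) := by
  refine ⟨fun p => ?_, fun t w hw => h.sur (t+1) w hw⟩
  have h1 := h.per
  unfold FZ
  have e : ∀ k : ℤ, p + n + k = p + k + n := fun k => by ring
  have e' : ∀ k : ℤ, p + n - k = p - k + n := fun k => by ring
  simp only [e, e', h1]

theorem Good.iter {n : ℕ} (t : ℕ) : ∀ {u : ℤ → Bool}, Good n u → Good n (FZ^[t] u) := by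
  induction t with
  | zero => intro u h; exact h
  | succ t ih => intro u h; exact ih h.step

theorem Good.av {n : ℕ} (hn : Odd n) {u : ℤ → Bool} (h : Good n u) : Avoid W2 u :=
  avoid_W2 (avoid_W1 (h.sur 0)) (avoid_W1 (h.step.sur 0)) hn h.per

theorem Good.per' {n : ℕ} {u : ℤ → Bool} (h : Good n u) (p : ℤ) : u (p - n) = u p := by
  have := h.per (p-n)
  rw [sub_add_cancel] at this
  exact this.symm

theorem Good.wall_per {n : ℕ} {u : ℤ → Bool} (h : Good n u) (w : ℤ) :
    wall u (w - n) = wall u w := by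
  have e : ∀ k : ℤ, w - n + k = w + k - n := fun k => by ring
  have e' : ∀ k : ℤ, w - n - k = w - k - n := fun k => by ring
  simp only [wall, e, e', h.per']

theorem Good.front_per {n : ℕ} {u : ℤ → Bool} (h : Good n u) (w : ℤ) :
    front u (w - n) = front u w := by
  have e : ∀ k : ℤ, w - n + k = w + k - n := fun k => by ring
  have e' : ∀ k : ℤ, w - n - k = w - k - n := fun k => by ring
  simp only [front, e, e', h.per']

theorem lemP {n : ℕ} (hn : Odd n) (N : ℕ) : ∀ (u : ℤ → Bool) (e w : ℤ), Good n u →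
    front u e = true → wall u w = true → e < w → (∀ v, wall u v = true → e < v → w ≤ v) →
    blk u e = false → (∀ t, wall (FZ^[t] u) w = true) →
    (bif box u e then 2 * (n:ℤ) + (e - w + n) else w - e) ≤ N →
    ∃ t, blk (FZ^[t] u) (w-1) = true := by
  have hn0 : 0 < n := hn.pos
  have hlt : ∀ (u : ℤ → Bool) (e w : ℤ), Good n u → front u e = true → wall u w = true →
      (∀ v, wall u v = true → e < v → w ≤ v) → w - e < n := by
    intro u e w hg he hw hv
    have h1 : wall u (w - n) = true := by rw [hg.wall_per, hw]
    have h2 := wf_ne h1 he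
    by_contra hc
    have := hv _ h1 (by omega)
    omega
  induction N with
  | zero =>
    intro u e w hg he hw hew hv _ _ hpot
    exfalso
    have := hlt u e w hg he hw hv
    cases hb : box u e <;> simp only [hb, cond_true, cond_false] at hpot <;> omega
  | succ N ih =>
    intro u e w hg he hw hew hv hblk hall hpot
    have hA := hg.av hn
    have hw1 : wall (FZ u) w = true := hall 1
    have hg0 : nw u w = w := by simp [nw, gsh, hw1]
    have he' := nf_front hA he
    have hew' : nf u e < w := by
      have := ord1 hA he hw hew
      rwa [hg0] at this
    have hv' : ∀ v, wall (FZ u) v = true → nf u e < v → w ≤ v := by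
      intro v hwv hlt'
      obtain ⟨w0, a1, rfl⟩ := nw_orig u hwv
      by_contra hc
      have b1 : w0 < w := by
        have : w0 ≤ nw u w0 := by unfold nw; omega
        omega
      have b2 : w0 < e := by
        have := wf_ne a1 he
        by_contra hc'
        have := hv w0 a1 (by omega)
        omega
      have := ord2 hA he a1 b2
      omega
    by_cases hblk' : blk (FZ u) (nf u e) = true
    · refine ⟨1, ?_⟩
      have h1 := hv' _ (blk_wall hblk') (by omega)
      have h2 : nf u e = w - 1 := by omega
      rw [← h2]
      exact hblk'
    · have hb1 := hlt u e w hg he hw hv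
      have hb2 := hlt (FZ u) (nf u e) w hg.step he' hw1 hv'
      obtain ⟨q1, q2⟩ := loc_P hA he
      obtain ⟨t, ht⟩ := ih (FZ u) (nf u e) w hg.step he' hw1 hew' hv' (by simpa using hblk')
        (fun t => hall (t+1)) (by
          cases hb : box u e
          · simp only [hb, cond_false] at hpot
            rcases q2 hb with ⟨c1, c2⟩ | c | ⟨c1, c2⟩
            · have e1 : nf u e = e + 2 := by unfold nf; omega
              rw [e1, c2, cond_false]
              push_cast at hpot
              omega
            · rw [hblk] at c; simp at c
            · have := hv _ c1 (by omega)
              have hw' : w = e + 1 := by omega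
              rw [← hw', hw1] at c2
              simp at c2
          · simp only [hb, cond_true] at hpot
            push_cast at hpot
            rcases q1 hb with c | ⟨c1, c2⟩ | ⟨c1, c2⟩
            · have e1 : nf u e = e - 2 := by unfold nf; omega
              rw [e1] at hb2 ⊢
              cases box (FZ u) (e-2)
              · rw [cond_false]; omega
              · rw [cond_true]; omega
            · have e1 : nf u e = e := by unfold nf; omega
              rw [e1] at hb2 ⊢
              rw [c2, cond_false]; omega
            · have e1 : nf u e = e + 2 := by unfold nf; omega
              rw [e1] at hb2 ⊢
              rw [c2, cond_false]; omega)
      exact ⟨t+1, ht⟩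

theorem lemP' {n : ℕ} (hn : Odd n) {u : ℤ → Bool} {e w : ℤ} (hg : Good n u)
    (he : front u e = true) (hw : wall u w = true) (hew : e < w)
    (hv : ∀ v, wall u v = true → e < v → w ≤ v)
    (hall : ∀ t, wall (FZ^[t] u) w = true) :
    ∃ t, blk (FZ^[t] u) (w-1) = true := by
  by_cases hb : blk u e = true
  · have := hv _ (blk_wall hb) (by omega)
    refine ⟨0, ?_⟩
    rw [show w - 1 = e by omega]
    exact hb
  · exact lemP hn (bif box u e then 2 * (n:ℤ) + (e - w + n) else w - e).toNat u e w hg he hw hew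
      hv (by simpa using hb) hall (Int.self_le_toNat _)

theorem no_two_blk {u : ℤ → Bool} (h : Avoid W2 u) {e : ℤ} (h1 : blk u e = true)
    (h2 : blk u (e-2) = true) : False := by
  obtain ⟨a1, a2, a3, a4, -⟩ := blk_iff.1 h1
  obtain ⟨b1, b2, b3, b4, -⟩ := blk_iff.1 h2
  apply h [false, true, false, true, false, true] (by simp [W2]) (e-4)
  simp only [List.length_cons, List.length_nil, win]
  rw [show e - 4 + 1 = e - 2 - 1 by ring, show e - 2 - 1 + 1 = e - 2 by ring,
    show e - 2 + 1 = e - 1 by ring, show e - 1 + 1 = e by ring,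
    show e - 4 = e - 2 - 2 by ring]
  simp [*]

theorem lemQ {n : ℕ} (hn : Odd n) {u : ℤ → Bool} {e : ℤ} (hg : Good n u)
    (hall : ∀ t, blk (FZ^[t] u) e = true) : False := by
  have hn0 : 0 < n := hn.pos
  have hw : ∀ t, wall (FZ^[t] u) (e-1) = true := by
    intro t
    obtain ⟨h1, h2, h3, h4, h5⟩ := blk_iff.1 (hall t)
    refine wall_iff.2 ⟨by rwa [show e - 1 - 1 = e - 2 by ring], h2, ?_⟩
    rintro ⟨-, -, c⟩
    rw [show e - 1 + 2 = e + 1 by ring, h4] at c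
    simp at c
  have hf : front u (e - n) = true := by
    rw [hg.front_per]
    obtain ⟨h1, h2, h3, h4, h5⟩ := blk_iff.1 (hall 0)
    refine front_iff.2 ⟨h2, h3, ?_⟩
    rintro ⟨-, -, c⟩
    have h4' : u (e+1) = true := h4
    rw [h4'] at c
    simp at c
  have hne := wf_ne (hw 0) hf
  obtain ⟨f, f1, f2, f3⟩ := adj_front (hw 0) hf (by omega)
  obtain ⟨t, ht⟩ := lemP' hn hg f1 (hw 0) f2 f3 hw
  rw [show e - 1 - 1 = e - 2 by ring] at ht
  exact no_two_blk ((hg.iter t).av hn) (hall t) ht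

theorem lemR {n : ℕ} (hn : Odd n) {u : ℤ → Bool} {w : ℤ} (hg : Good n u)
    (hall : ∀ t, wall (FZ^[t] u) w = true) : False := by
  have hn0 : 0 < n := hn.pos
  have hw : wall u w = true := hall 0
  obtain ⟨e0, h1, h2, h3⟩ := alt2 (a := w - n) (by rw [hg.wall_per, hw]) hw (by omega)
  obtain ⟨f, f1, f2, f3⟩ := adj_front hw h1 h3
  obtain ⟨t0, ht⟩ := lemP' hn hg f1 hw f2 f3 hall
  refine lemQ hn (hg.iter t0) (e := w-1) (fun t => ?_)
  rw [← Function.iterate_add_apply]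
  induction t with
  | zero => simpa using ht
  | succ t ih =>
    have e1 : FZ^[t + 1 + t0] u = FZ (FZ^[t + t0] u) := by
      rw [show t + 1 + t0 = (t + t0) + 1 by omega, Function.iterate_succ_apply']
    have h5 := hall (t + 1 + t0)
    rw [e1] at h5 ⊢
    exact loc_B ((hg.iter (t + t0)).av hn) ih (by rwa [sub_add_cancel])

/-- Two consecutive fronts at odd distance, with the wall between them. -/
structure Tri (u : ℤ → Bool) (a w b : ℤ) : Prop where
  fa : front u a = true
  fb : front u b = true
  wl : wall u w = true
  aw : a < w
  wb : w < b
  un : ∀ v, wall u v = true → a < v → v < b → v = w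
  od : Odd (b - a)

theorem Tri.step {u : ℤ → Bool} (h : Avoid W2 u) {a w b : ℤ} (t : Tri u a w b) :
    Tri (FZ u) (nf u a) (nw u w) (nf u b) where
  fa := nf_front h t.fa
  fb := nf_front h t.fb
  wl := nw_wall h t.wl
  aw := ord1 h t.fa t.wl t.aw
  wb := ord2 h t.fb t.wl t.wb
  un := by
    intro v hv h1 h2
    obtain ⟨w0, a1, rfl⟩ := nw_orig u hv
    have n1 := wf_ne a1 t.fa
    have n2 := wf_ne a1 t.fb
    have b1 : a < w0 := by
      by_contra hc
      have := ord2 h t.fa a1 (by omega)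
      omega
    have b2 : w0 < b := by
      by_contra hc
      have := ord1 h t.fb a1 (by omega)
      omega
    rw [t.un w0 a1 b1 b2]
  od := by
    obtain ⟨k1, h1⟩ := nf_even h t.fa
    obtain ⟨k2, h2⟩ := nf_even h t.fb
    obtain ⟨m, hm⟩ := t.od
    exact ⟨m + k2 - k1, by rw [h1, h2]; linarith⟩

theorem Tri.hit {u : ℤ → Bool} (h : Avoid W2 u) {a w b : ℤ} (t : Tri u a w b) :
    nw u w = w ∨ (Even (b - w) ∧ Odd (nf u b - nw u w)) := by
  obtain ⟨m, hm⟩ := t.od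
  obtain ⟨k2, hk2⟩ := nf_even h t.fb
  have hR : ∀ f, front u f = true → w < f → b ≤ f := by
    intro f hf hwf
    by_contra hc
    obtain ⟨v, v1, v2, v3⟩ := alt1 hf t.fb (by omega)
    have := t.un v v1 (by have := t.aw; omega) v3
    omega
  have hL : front u (w-1) = true → a = w - 1 := by
    intro hf
    by_contra hc
    have := t.aw
    obtain ⟨v, v1, v2, v3⟩ := alt1 t.fa hf (by omega)
    have := t.un v v1 v2 (by have := t.wb; omega)
    omega
  have hff : ∀ p, front u p = true → front u (p+1) = true → False := by
    intro p h1 h2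
    have h1' := (front_iff.1 h1).2.1
    have h2' := (front_iff.1 h2).1
    rw [add_sub_cancel_right, h1'] at h2'
    simp at h2'
  have hwb := t.wb
  rcases loc_R h t.wl with h0 | ⟨h0, h1⟩ | ⟨h0, h1, h2⟩ | ⟨h0, h1⟩
  · left; unfold nw; omega
  · right
    have := hL h1
    refine ⟨⟨m, by omega⟩, ⟨m + k2 - 1, ?_⟩⟩
    rw [hk2, nw, h0]; push_cast; omega
  · exfalso
    have ha := hL h1
    rcases h2 with h2 | h2
    · have := hR _ h2 (by omega)
      omega
    · have := hR _ h2 (by omega)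
      have hb : b = w + 2 := by omega
      have h3 := t.fb
      rw [hb] at h3
      exact hff _ h3 (by rwa [show w + 2 + 1 = w + 3 by ring])
  · right
    have := hR _ h1 (by omega)
    have hb : b = w + 2 := by
      by_contra hc
      have hb : b = w + 1 := by omega
      have h3 := t.fb
      rw [hb] at h3
      exact hff _ h3 (by rwa [show w + 1 + 1 = w + 2 by ring])
    refine ⟨⟨1, by omega⟩, ⟨k2 - 1, ?_⟩⟩
    rw [hk2, nw, h0]; push_cast; omega

theorem triA {n : ℕ} (hn : Odd n) {w : ℤ} (t : ℕ) : ∀ (u : ℤ → Bool) (a b : ℤ), Good n u →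
    Tri u a w b → Odd (b - w) → wall (FZ^[t] u) w = true := by
  induction t with
  | zero => intro u a b _ h _; exact h.wl
  | succ t ih =>
    intro u a b hg ht ho
    have hA := hg.av hn
    have hs := ht.step hA
    rcases ht.hit hA with h | ⟨h, -⟩
    · rw [h] at hs
      obtain ⟨k, hk⟩ := nf_even hA ht.fb
      obtain ⟨m, hm⟩ := ho
      exact ih (FZ u) _ _ hg.step hs ⟨m + k, by omega⟩
    · exact absurd ho (Int.not_odd_iff_even.2 h)

theorem triA' {n : ℕ} (hn : Odd n) {u : ℤ → Bool} {a w b : ℤ} (hg : Good n u)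
    (ht : Tri u a w b) (ho : Odd (b - w)) : False :=
  lemR hn hg (fun t => triA hn t u a b hg ht ho)

theorem triB {n : ℕ} (hn : Odd n) {w : ℤ} (t : ℕ) : ∀ (u : ℤ → Bool) (a b : ℤ), Good n u →
    Tri u a w b → wall (FZ^[t] u) w = true := by
  induction t with
  | zero => intro u a b _ h; exact h.wl
  | succ t ih =>
    intro u a b hg ht
    have hA := hg.av hn
    have hs := ht.step hA
    rcases ht.hit hA with h | ⟨-, h⟩
    · rw [h] at hs
      exact ih (FZ u) _ _ hg.step hs
    · exact (triA' hn hg.step hs h).elim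

/-- A good configuration of odd period has no front. -/
theorem good_no_front {n : ℕ} (hn : Odd n) {u : ℤ → Bool} (hg : Good n u) (e : ℤ) :
    front u e = false := by
  by_contra he
  have he : front u e = true := by simpa using he
  classical
  have hex : ∃ k : ℕ, Odd k ∧ ∃ e, front u e = true ∧ front u (e + k) = true :=
    ⟨n, hn, e - n, by rw [hg.front_per, he], by rw [sub_add_cancel, he]⟩
  obtain ⟨hk, a, h1, h2⟩ := Nat.find_spec hex
  have hmin : ∀ m < Nat.find hex, ¬ _ := fun m hm => Nat.find_min hex hm
  generalize Nat.find hex = k at *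
  have hk0 : 0 < k := hk.pos
  have hbet : ∀ f, front u f = true → a < f → f < a + k → False := by
    intro f hf ha hb
    rcases Int.even_or_odd (f - a) with hp | hp
    · apply hmin (a + k - f).toNat (by omega)
      have e1 : (((a + k - f).toNat : ℕ) : ℤ) = a + k - f := Int.toNat_of_nonneg (by omega)
      refine ⟨?_, f, hf, ?_⟩
      · obtain ⟨m, hm⟩ := hp
        obtain ⟨j, hj⟩ := hk
        exact ⟨(j - m).toNat, by omega⟩
      · rw [e1, show f + (a + k - f) = a + k by ring]; exact h2
    · apply hmin (f - a).toNat (by omega)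
      have e1 : (((f - a).toNat : ℕ) : ℤ) = f - a := Int.toNat_of_nonneg (by omega)
      refine ⟨?_, a, h1, ?_⟩
      · obtain ⟨m, hm⟩ := hp
        exact ⟨m.toNat, by omega⟩
      · rw [e1, show a + (f - a) = f by ring]; exact hf
  obtain ⟨w, w1, w2, w3⟩ := alt1 h1 h2 (by omega)
  have ht : Tri u a w (a + k) := by
    refine ⟨h1, h2, w1, w2, w3, ?_, ?_⟩
    · intro v hv hav hvb
      by_contra hne
      rcases lt_or_gt_of_ne hne with hlt | hlt
      · obtain ⟨f, f1, f2, f3⟩ := alt2 hv w1 hlt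
        exact hbet f f1 (by omega) (by omega)
      · obtain ⟨f, f1, f2, f3⟩ := alt2 w1 hv hlt
        exact hbet f f1 (by omega) (by omega)
    · rw [add_sub_cancel_left]
      exact_mod_cast hk
  exact lemR hn hg (fun t => triB hn t u a (a + k) hg ht)


/-! ### Cyclic configurations and counting -/

/-- The periodic bi-infinite configuration of a cyclic configuration. -/
def lft {n : ℕ} (x : ZMod n → Bool) (k : ℤ) : Bool := x (k : ZMod n)

theorem lft_step {n : ℕ} (x : ZMod n → Bool) : FZ (lft x) = lft (bfoGlobal x) := by
  funext p
  have e : ∀ (j : ℕ) (k : ℤ), (j:ℤ) - 4 = k →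
      x ((p:ZMod n) + (j : ZMod n) - ((4:ℕ) : ZMod n)) = x ((p + k : ℤ) : ZMod n) := by
    intro j k hk
    rw [← hk]
    congr 1
    push_cast
    ring
  have e0 := e 0 (-4) (by norm_num)
  have e1 := e 1 (-3) (by norm_num)
  have e2 := e 2 (-2) (by norm_num)
  have e3 := e 3 (-1) (by norm_num)
  have e4 := e 4 0 (by norm_num)
  have e5 := e 5 1 (by norm_num)
  have e6 := e 6 2 (by norm_num)
  have e7 := e 7 3 (by norm_num)
  have e8 := e 8 4 (by norm_num)
  have h : lft (bfoGlobal x) p = bfoLocal (fun j : Fin 9 =>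
    x ((p:ZMod n) + ((j : ℕ) : ZMod n) - ((4:ℕ) : ZMod n))) := rfl
  rw [h]
  unfold bfoLocal bfoActive FZ loc lft
  simp only [sub_eq_add_neg] at *
  simp only [show ((0 : Fin 9) : ℕ) = 0 from rfl, show ((1 : Fin 9) : ℕ) = 1 from rfl,
    show ((2 : Fin 9) : ℕ) = 2 from rfl, show ((3 : Fin 9) : ℕ) = 3 from rfl,
    show ((4 : Fin 9) : ℕ) = 4 from rfl, show ((5 : Fin 9) : ℕ) = 5 from rfl,
    show ((6 : Fin 9) : ℕ) = 6 from rfl, show ((7 : Fin 9) : ℕ) = 7 from rfl,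
    show ((8 : Fin 9) : ℕ) = 8 from rfl]
  rw [e0, e1, e2, e3, e4, e5, e6, e7, e8, add_zero]

theorem lft_iter {n : ℕ} (t : ℕ) : ∀ x : ZMod n → Bool,
    FZ^[t] (lft x) = lft (bfoGlobal^[t] x) := by
  induction t with
  | zero => intro x; rfl
  | succ t ih => intro x; rw [Function.iterate_succ_apply, Function.iterate_succ_apply,
      lft_step, ih]

/-- Walls of cyclic configurations. -/
def wz {n : ℕ} (x : ZMod n → Bool) (i : ZMod n) : Bool :=
  !x (i-1) && x i && !(x (i-2) && !x (i+1) && !x (i+2))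

theorem wall_lft {n : ℕ} (x : ZMod n → Bool) (k : ℤ) : wall (lft x) k = wz x (k : ZMod n) := by
  simp [wall, wz, lft]

/-- Boxes of cyclic configurations. -/
def bz {n : ℕ} (x : ZMod n → Bool) (i : ZMod n) : Bool :=
  x (i-1) && !x i && x (i+1) && !x (i+2) && !x (i+3)

theorem isBox_iff {n : ℕ} (x : ZMod n → Bool) (i : ZMod n) : IsBox x i ↔ bz x i = true := by
  simp [IsBox, bz, and_assoc]

theorem inBox_iff {n : ℕ} (x : ZMod n → Bool) (j : ZMod n) :
    InBox x j ↔ bz x j = true ∨ bz x (j-1) = true := by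
  unfold InBox
  constructor
  · rintro ⟨i, h, rfl | rfl⟩
    · exact Or.inl ((isBox_iff _ _).1 h)
    · right; rw [add_sub_cancel_right]; exact (isBox_iff _ _).1 h
  · rintro (h | h)
    · exact ⟨j, (isBox_iff _ _).2 h, Or.inl rfl⟩
    · exact ⟨j-1, (isBox_iff _ _).2 h, Or.inr (by ring)⟩

/-- Boolean to integer. -/
def bi (b : Bool) : ℤ := bif b then 1 else 0

def swz {n : ℕ} (x : ZMod n → Bool) (i : ZMod n) : Bool :=
  bz x (i+1) || (xor (x i) (x (i+1)) && !(bz x i || bz x (i-1)) && !(bz x (i+1) || bz x i))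

theorem isSwitch_iff {n : ℕ} (x : ZMod n → Bool) (i : ZMod n) :
    IsSwitch x i ↔ swz x i = true := by
  unfold IsSwitch swz
  rw [isBox_iff, inBox_iff, inBox_iff, add_sub_cancel_right]
  cases bz x (i+1) <;> cases bz x i <;> cases bz x (i-1) <;> cases x i <;> cases x (i+1) <;> simp

theorem point1 {n : ℕ} (x : ZMod n → Bool) (i : ZMod n) :
    bi (swz x i) = bi (!x i && x (i+1)) + bi (x i && !x (i+1)) - bi (bz x i) - bi (bz x (i-1)) := by
  unfold swz bz
  rw [show i - 1 - 1 = i - 2 by ring, show i - 1 + 1 = i by ring, show i - 1 + 2 = i + 1 by ring,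
    show i - 1 + 3 = i + 2 by ring, show i + 1 - 1 = i by ring, show i + 1 + 1 = i + 2 by ring,
    show i + 1 + 2 = i + 3 by ring, show i + 1 + 3 = i + 4 by ring]
  generalize x (i-2) = a
  generalize x (i-1) = b
  generalize x i = c
  generalize x (i+1) = d
  generalize x (i+2) = e
  generalize x (i+3) = f
  generalize x (i+4) = g
  revert a b c d e f g
  decide

theorem point2 {n : ℕ} (x : ZMod n → Bool) (i : ZMod n) :
    bi (wz x (i+1)) = bi (!x i && x (i+1)) - bi (bz x i) := by
  unfold wz bz
  rw [show i + 1 - 1 = i by ring, show i + 1 - 2 = i - 1 by ring, show i + 1 + 1 = i + 2 by ring,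
    show i + 1 + 2 = i + 3 by ring]
  generalize x (i-1) = b
  generalize x i = c
  generalize x (i+1) = d
  generalize x (i+2) = e
  generalize x (i+3) = f
  revert b c d e f
  decide

theorem point3 (a b : Bool) : bi (!a && b) - bi (a && !b) = bi b - bi a := by
  revert a b
  decide

theorem sum_shift {n : ℕ} [NeZero n] (f : ZMod n → ℤ) (c : ZMod n) :
    ∑ i, f (i + c) = ∑ i, f i :=
  Fintype.sum_equiv (Equiv.addRight c) _ _ (fun _ => rfl)

theorem card_bi {n : ℕ} [NeZero n] (p : ZMod n → Bool) :
    (((Finset.univ.filter (fun i => p i = true)).card : ℕ) : ℤ) = ∑ i, bi (p i) := by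
  rw [Finset.card_filter]
  push_cast
  refine Finset.sum_congr rfl (fun i _ => ?_)
  cases p i <;> simp [bi]

theorem switchCount_eq {n : ℕ} [NeZero n] (x : ZMod n → Bool) :
    switchCount x = 2 * (Finset.univ.filter (fun i => wz x i = true)).card := by
  have h1 : switchCount x = (Finset.univ.filter (fun i => swz x i = true)).card := by
    unfold switchCount
    simp only [isSwitch_iff]
    rw [Nat.card_eq_fintype_card, Fintype.card_subtype]
  have h2 := card_bi (swz x)
  have h3 := card_bi (wz x)
  rw [← sum_shift _ 1] at h3
  simp only [point1, point2, Finset.sum_add_distrib, Finset.sum_sub_distrib] at h2 h3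
  have h4 : ∑ i, bi (bz x (i-1)) = ∑ i, bi (bz x i) := by
    simp only [sub_eq_add_neg]
    exact sum_shift (fun i => bi (bz x i)) (-1)
  have h5 : ∑ i, bi (!x i && x (i+1)) - ∑ i, bi (x i && !x (i+1)) = 0 := by
    rw [← Finset.sum_sub_distrib]
    simp only [point3, Finset.sum_sub_distrib]
    rw [sum_shift (fun i => bi (x i)) 1, sub_self]
  rw [h1]
  zify
  rw [h2, h3]
  linarith

theorem orig_z {n : ℕ} (x : ZMod n → Bool) (v : ZMod n) :
    ∃ d : ℕ, wz (bfoGlobal x) v = true → d ≤ 3 ∧ wz x (v-d) = true ∧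
      (∀ j : ℕ, j < d → wz x (v-j) = false) ∧
      (∀ j : ℕ, j < d → wz (bfoGlobal x) (v-d+j) = false) := by
  obtain ⟨k, rfl⟩ := ZMod.intCast_surjective v
  by_cases h : wz (bfoGlobal x) (k : ZMod n) = true
  · rw [← wall_lft, ← lft_step] at h
    obtain ⟨d, h1, h2, h3, h4⟩ := wall_orig _ h
    refine ⟨d, fun _ => ⟨h1, ?_, fun j hj => ?_, fun j hj => ?_⟩⟩
    · rw [wall_lft] at h2; simpa using h2
    · have := h3 j hj
      rw [wall_lft] at this; simpa using this
    · have := h4 j hj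
      rw [lft_step, wall_lft] at this; simpa using this
  · exact ⟨0, fun h' => absurd h' h⟩

theorem sv_of_count {n : ℕ} [NeZero n] (x : ZMod n → Bool)
    (hc : switchCount (bfoGlobal x) = switchCount x) (w : ℤ) (hw : wall (lft x) w = true) :
    sv (lft x) w = true := by
  rw [switchCount_eq, switchCount_eq] at hc
  choose d hd using orig_z x
  have hinj : Set.InjOn (fun v : ZMod n => v - d v)
      (Finset.univ.filter (fun i => wz (bfoGlobal x) i = true) : Finset (ZMod n)) := by
    have key : ∀ v1 v2 : ZMod n, wz (bfoGlobal x) v1 = true → wz (bfoGlobal x) v2 = true →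
        v1 - d v1 = v2 - d v2 → ¬ d v1 < d v2 := by
      intro v1 v2 a1 a2 he hlt
      have := (hd v2 a2).2.2.2 _ hlt
      rw [← he, sub_add_cancel, a1] at this
      simp at this
    intro v1 h1 v2 h2 he
    have a1 : wz (bfoGlobal x) v1 = true := by simpa using h1
    have a2 : wz (bfoGlobal x) v2 = true := by simpa using h2
    have he : v1 - d v1 = v2 - d v2 := he
    have e : d v1 = d v2 := by
      have k1 := key v1 v2 a1 a2 he
      have k2 := key v2 v1 a2 a1 he.symm
      omega
    rw [e] at he
    exact sub_left_injective he
  have himg : (Finset.univ.filter (fun i => wz (bfoGlobal x) i = true)).image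
      (fun v : ZMod n => v - d v) = Finset.univ.filter (fun i => wz x i = true) := by
    apply Finset.eq_of_subset_of_card_le
    · intro i hi
      obtain ⟨v, hv, rfl⟩ := Finset.mem_image.1 hi
      have := (hd v (by simpa using hv)).2.1
      simpa using this
    · rw [Finset.card_image_of_injOn hinj]
      omega
  have hmem : (w : ZMod n) ∈ Finset.univ.filter (fun i => wz x i = true) := by
    rw [wall_lft] at hw
    simpa using hw
  rw [← himg] at hmem
  obtain ⟨v, hv, hvw⟩ := Finset.mem_image.1 hmem
  have hv : wz (bfoGlobal x) v = true := by simpa using hv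
  obtain ⟨h1, -, h3, -⟩ := hd v hv
  have hvw : v = ((w + d v : ℤ) : ZMod n) := by
    have : v - d v = (w : ZMod n) := hvw
    push_cast
    rw [← this]
    ring
  have b1 : wall (FZ (lft x)) (w + d v) = true := by
    rw [lft_step, wall_lft, ← hvw]; exact hv
  have b2 : ∀ j : ℕ, j < d v → wall (lft x) (w + d v - j) = false := by
    intro j hj
    have := h3 j hj
    rw [hvw] at this
    rw [wall_lft]
    push_cast at this ⊢
    exact this
  generalize d v = m at *
  interval_cases m
  · simp only [Nat.cast_zero, add_zero] at b1
    simp [sv, b1]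
  · have c0 := b2 0 (by norm_num)
    push_cast at b1 c0
    rw [sub_zero] at c0
    simp [sv, b1, c0]
  · have c0 := b2 0 (by norm_num)
    have c1 := b2 1 (by norm_num)
    push_cast at b1 c0 c1
    rw [sub_zero] at c0
    rw [show w + 2 - 1 = w + 1 by ring] at c1
    simp [sv, b1, c0, c1]
  · have c0 := b2 0 (by norm_num)
    have c1 := b2 1 (by norm_num)
    have c2 := b2 2 (by norm_num)
    push_cast at b1 c0 c1 c2
    rw [sub_zero] at c0
    rw [show w + 3 - 1 = w + 2 by ring] at c1
    rw [show w + 3 - 2 = w + 1 by ring] at c2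
    simp [sv, b1, c0, c1, c2]

theorem good_of_InXs {n : ℕ} [NeZero n] (x : ZMod n → Bool) (hx : InXs x) : Good n (lft x) := by
  refine ⟨fun p => by simp [lft], fun t w hw => ?_⟩
  rw [lft_iter] at hw ⊢
  refine sv_of_count _ ?_ w hw
  have h1 := hx (t+1)
  rw [Function.iterate_succ_apply'] at h1
  rw [h1, hx t]

/-- For odd `n` a configuration in `X_s` does not contain 101. -/
theorem no_101 {n : ℕ} (hn : Odd n) (x : ZMod n → Bool) (hx : InXs x) (i : ZMod n)
    (h2 : x (i + 2) = true) (h3 : x (i + 3) = false) (h4 : x (i + 4) = true) : False := by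
  have : NeZero n := ⟨hn.pos.ne'⟩
  obtain ⟨k, rfl⟩ := ZMod.intCast_surjective i
  have hf := good_no_front hn (good_of_InXs x hx) (k+3)
  have : front (lft x) (k+3) = true := by
    refine front_iff.2 ⟨?_, ?_, ?_⟩
    · rw [show k + 3 - 1 = k + 2 by ring]; simpa [lft] using h2
    · simpa [lft] using h3
    · rintro ⟨-, -, c⟩
      rw [show k + 3 + 1 = k + 4 by ring] at c
      have h4' : lft x (k+4) = true := by simpa [lft] using h4
      rw [h4'] at c
      simp at c
  rw [this] at hf
  simp at hf

end BFO


/-- A configuration in `X_s` contains none of the blocks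
`0110100`, `1110100`, `111010100`, `1110111`, `1110110100`. -/
theorem Xs_no_box_domains (n : ℕ) (hn : Odd n) (x : ZMod n → Bool)
    (hx : InXs x) (i : ZMod n) :
    ¬ ContainsAt x i [false, true, true, false, true, false, false] ∧
    ¬ ContainsAt x i [true, true, true, false, true, false, false] ∧
    ¬ ContainsAt x i [true, true, true, false, true, false, true, false, false] ∧
    ¬ ContainsAt x i [true, true, true, false, true, true, true] ∧
    ¬ ContainsAt x i
        [true, true, true, false, true, true, false, true, false, false] := by
  refine ⟨?_, ?_, ?_, ?_, ?_⟩ <;>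
  · intro h
    refine BFO.no_101 hn x hx i ?_ ?_ ?_
    · exact_mod_cast h ⟨2, by simp⟩
    · exact_mod_cast h ⟨3, by simp⟩
    · exact_mod_cast h ⟨4, by simp⟩
end
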